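/- arXiv:2308.01182 — 3 statements merged into one kernel-verified Lean document; each statement's English description precedes it below -/
import Mathlib

section
/- Let G be an abelian group of twice odd order, A a Schur ring over G, Q the least A-subgroup of even order, K the largest A-subgroup of odd order, and L = Q ∩ K. Then Q ∖ L is a basic set of A, and A is the K/L-wreath product (every basic set of A outside K is a union of L-cosets). -/
open scoped Pointwise

noncomputable def clsum {G : Type*} [Group G] [Fintype G] (s : Set G) :
    MonoidAlgebra ℤ G :=
  ∑ x ∈ s.toFinite.toFinset, MonoidAlgebra.of ℤ G x

structure SchurRing (G : Type*) [Group G] [Fintype G] where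
  P : Set (Set G)
  one_mem : ({(1 : G)} : Set G) ∈ P
  nonempty_cls : ∀ X ∈ P, X.Nonempty
  cover : ∀ g : G, ∃ X ∈ P, g ∈ X
  disj : ∀ X ∈ P, ∀ Y ∈ P, X ≠ Y → Disjoint X Y
  inv_mem : ∀ X ∈ P, X⁻¹ ∈ P
  mul_closed : ∀ X ∈ P, ∀ Y ∈ P,
    clsum X * clsum Y ∈ Submodule.span ℤ (clsum '' P)

def SchurRing.isASet {G : Type*} [Group G] [Fintype G] (A : SchurRing G) (X : Set G) : Prop :=
  clsum X ∈ Submodule.span ℤ (clsum '' A.P)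


namespace SR

open Classical in
lemma coeff_clsum {G : Type*} [Group G] [Fintype G] (s : Set G) (g : G) :
    (clsum s).coeff g = if g ∈ s then 1 else 0 := by
  unfold clsum
  rw [MonoidAlgebra.coeff_sum, Finsupp.finsetSum_apply]
  simp [MonoidAlgebra.of_apply, MonoidAlgebra.coeff_single, Finsupp.single_apply]

/-- `Z` is a union of basic sets. -/
def Inv {G : Type*} [Group G] [Fintype G] (A : SchurRing G) (Z : Set G) : Prop :=
  ∀ C ∈ A.P, ∀ g ∈ C, ∀ h ∈ C, g ∈ Z → h ∈ Z

lemma eq_of_mem {G : Type*} [Group G] [Fintype G] (A : SchurRing G) {X Y : Set G}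
    (hX : X ∈ A.P) (hY : Y ∈ A.P) {g : G} (h1 : g ∈ X) (h2 : g ∈ Y) : X = Y := by
  by_contra h
  exact Set.disjoint_left.1 (A.disj X hX Y hY h) h1 h2

lemma const_of_span {G : Type*} [Group G] [Fintype G] (A : SchurRing G)
    {f : MonoidAlgebra ℤ G} (hf : f ∈ Submodule.span ℤ (clsum '' A.P))
    {C : Set G} (hC : C ∈ A.P) {g h : G} (hg : g ∈ C) (hh : h ∈ C) :
    f.coeff g = f.coeff h := by
  induction hf using Submodule.span_induction with
  | mem x hx =>
    obtain ⟨X, hX, rfl⟩ := hx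
    rw [coeff_clsum, coeff_clsum]
    have : g ∈ X ↔ h ∈ X := by
      constructor
      · intro h1
        rw [eq_of_mem A hX hC h1 hg]; exact hh
      · intro h1
        rw [eq_of_mem A hX hC h1 hh]; exact hg
    by_cases h1 : h ∈ X
    · rw [if_pos h1, if_pos (this.2 h1)]
    · rw [if_neg h1, if_neg (fun h2 => h1 (this.1 h2))]
  | zero => simp
  | add x y _ _ h1 h2 => simp [h1, h2]
  | smul a x _ h1 => rw [MonoidAlgebra.coeff_smul_apply, MonoidAlgebra.coeff_smul_apply, h1]

lemma inv_of_isASet {G : Type*} [Group G] [Fintype G] {A : SchurRing G} {Z : Set G}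
    (hZ : A.isASet Z) : Inv A Z := by
  intro C hC g hg h hh hgZ
  have := const_of_span A hZ hC hg hh
  rw [coeff_clsum, coeff_clsum, if_pos hgZ] at this
  by_contra h1
  rw [if_neg h1] at this
  exact one_ne_zero this

open Classical in
lemma isASet_of_inv {G : Type*} [Group G] [Fintype G] {A : SchurRing G} {Z : Set G}
    (hZ : Inv A Z) : A.isASet Z := by
  have key : clsum Z = ∑ C ∈ (Finset.univ : Finset (Set G)).filter
      (fun C => C ∈ A.P ∧ C ⊆ Z), clsum C := by
    ext g
    rw [MonoidAlgebra.coeff_sum, Finsupp.finsetSum_apply]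
    simp only [coeff_clsum]
    obtain ⟨D, hD, hgD⟩ := A.cover g
    by_cases hg : g ∈ Z
    · rw [if_pos hg, Finset.sum_eq_single D]
      · rw [if_pos hgD]
      · intro C hC hne
        rw [if_neg]
        intro hgC
        exact hne (eq_of_mem A (Finset.mem_filter.1 hC).2.1 hD hgC hgD)
      · intro h
        exfalso
        apply h
        simp only [Finset.mem_filter, Finset.mem_univ, true_and]
        exact ⟨hD, fun h hh => hZ D hD g hgD h hh hg⟩
    · rw [if_neg hg, Finset.sum_eq_zero]
      intro C hC
      rw [if_neg]
      intro hgC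
      exact hg ((Finset.mem_filter.1 hC).2.2 hgC)
  unfold SchurRing.isASet
  rw [key]
  apply Submodule.sum_mem
  intro C hC
  exact Submodule.subset_span ⟨C, (Finset.mem_filter.1 hC).2.1, rfl⟩

lemma mul_mem_span {G : Type*} [Group G] [Fintype G] (A : SchurRing G)
    {f g : MonoidAlgebra ℤ G} (hf : f ∈ Submodule.span ℤ (clsum '' A.P))
    (hg : g ∈ Submodule.span ℤ (clsum '' A.P)) :
    f * g ∈ Submodule.span ℤ (clsum '' A.P) := by
  have h := Submodule.mul_mem_mul hf hg
  rw [Submodule.span_mul_span] at h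
  refine (Submodule.span_le.2 ?_) h
  rintro _ ⟨_, ⟨X, hX, rfl⟩, _, ⟨Y, hY, rfl⟩, rfl⟩
  exact A.mul_closed X hX Y hY

open Classical in
/-- number of ways to write `g = x y` with `x ∈ X`, `y ∈ Y`. -/
noncomputable def cnt {G : Type*} [Group G] [Fintype G] (X Y : Set G) (g : G) : ℕ :=
  (Finset.univ.filter (fun x : G => x ∈ X ∧ x⁻¹ * g ∈ Y)).card

lemma coeff_mul_clsum {G : Type*} [Group G] [Fintype G] (X Y : Set G) (g : G) :
    (clsum X * clsum Y).coeff g = cnt X Y g := by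
  classical
  rw [MonoidAlgebra.coeff_mul_apply_left, Finsupp.sum_fintype _ _ (by simp)]
  simp only [coeff_clsum, cnt]
  rw [Finset.card_filter]
  push_cast
  apply Finset.sum_congr rfl
  intro x _
  by_cases h1 : x ∈ X <;> simp [h1]

lemma cnt_const {G : Type*} [Group G] [Fintype G] {A : SchurRing G} {X Y : Set G}
    (hX : Inv A X) (hY : Inv A Y) {C : Set G} (hC : C ∈ A.P) {g h : G}
    (hg : g ∈ C) (hh : h ∈ C) : cnt X Y g = cnt X Y h := by
  have := const_of_span A (mul_mem_span A (isASet_of_inv hX) (isASet_of_inv hY)) hC hg hh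
  rw [coeff_mul_clsum, coeff_mul_clsum] at this
  exact_mod_cast this

lemma inv_basic {G : Type*} [Group G] [Fintype G] {A : SchurRing G} {X : Set G}
    (hX : X ∈ A.P) : Inv A X := by
  intro C hC g hg h hh hgX
  rw [eq_of_mem A hX hC hgX hg]; exact hh

lemma inv_setInv {G : Type*} [Group G] [Fintype G] {A : SchurRing G} {X : Set G}
    (hX : Inv A X) : Inv A X⁻¹ := by
  intro C hC g hg h hh hgX
  exact hX C⁻¹ (A.inv_mem C hC) g⁻¹ (by simpa using hg) h⁻¹ (by simpa using hh) hgX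

lemma inv_union {G : Type*} [Group G] [Fintype G] {A : SchurRing G} {X Y : Set G}
    (hX : Inv A X) (hY : Inv A Y) : Inv A (X ∪ Y) := by
  intro C hC g hg h hh hgX
  exact hgX.imp (hX C hC g hg h hh) (hY C hC g hg h hh)

lemma inv_mul {G : Type*} [Group G] [Fintype G] {A : SchurRing G} {X Y : Set G}
    (hX : Inv A X) (hY : Inv A Y) : Inv A (X * Y) := by
  classical
  have key : ∀ g, g ∈ X * Y ↔ 0 < cnt X Y g := by
    intro g
    rw [cnt, Finset.card_pos]
    constructor
    · rintro ⟨x, hx, y, hy, rfl⟩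
      exact ⟨x, by simpa using ⟨hx, hy⟩⟩
    · rintro ⟨x, hx⟩
      simp only [Finset.mem_filter, Finset.mem_univ, true_and] at hx
      exact ⟨x, hx.1, _, hx.2, by simp⟩
  intro C hC g hg h hh hgX
  rw [key] at hgX ⊢
  rwa [← cnt_const hX hY hC hg hh]

lemma inv_closure {G : Type*} [Group G] [Fintype G] {A : SchurRing G} {R : Set G}
    (hR : Inv A R) : Inv A (Subgroup.closure R : Set G) := by
  have key : ∀ g ∈ Subgroup.closure R, ∀ C ∈ A.P, g ∈ C →
      C ⊆ (Subgroup.closure R : Set G) := by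
    intro g hg
    induction hg using Subgroup.closure_induction with
    | mem x hx =>
      intro C hC hxC y hy
      exact Subgroup.subset_closure (hR C hC x hxC y hy hx)
    | one =>
      intro C hC h1
      rw [eq_of_mem A hC A.one_mem h1 rfl]
      rintro _ rfl
      exact one_mem _
    | mul x y _ _ hx hy =>
      intro C hC hxy z hz
      obtain ⟨D, hD, hxD⟩ := A.cover x
      obtain ⟨E, hE, hyE⟩ := A.cover y
      obtain ⟨a, ha, b, hb, rfl⟩ := inv_mul (inv_basic hD) (inv_basic hE) C hC _ hxy z hz
        ⟨x, hxD, y, hyE, rfl⟩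
      exact mul_mem (hx D hD hxD ha) (hy E hE hyE hb)
    | inv x _ hx =>
      intro C hC hxC z hz
      have := hx C⁻¹ (A.inv_mem C hC) (by simpa using hxC) (show z⁻¹ ∈ C⁻¹ by simpa using hz)
      simpa using this
  intro C hC g hg h hh hgX
  exact key g hgX C hC hg hh

/-- The counting principle used in all three places. -/
lemma count_principle {G : Type*} [CommGroup G] [Fintype G] {A : SchurRing G} {X Y : Set G}
    (hX : Inv A X) (hY : Inv A Y) {C : Set G} (hC : C ∈ A.P) {g h : G}
    (hg : g ∈ C) (hh : h ∈ C)
    (hsub : ∀ x ∈ X, x * h⁻¹ ∈ Y → x * g⁻¹ ∈ Y) :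
    ∀ x ∈ X, x * g⁻¹ ∈ Y → x * h⁻¹ ∈ Y := by
  classical
  have h1 := cnt_const hX (inv_setInv hY) hC hg hh
  unfold cnt at h1
  have h2 := Finset.eq_of_subset_of_card_le
    (s := Finset.univ.filter (fun x : G => x ∈ X ∧ x⁻¹ * h ∈ Y⁻¹))
    (t := Finset.univ.filter (fun x : G => x ∈ X ∧ x⁻¹ * g ∈ Y⁻¹)) (by
      intro x hx
      simp only [Finset.mem_filter, Finset.mem_univ, true_and, Set.mem_inv, mul_inv_rev,
        inv_inv, mul_comm _ x] at hx ⊢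
      exact ⟨hx.1, hsub x hx.1 hx.2⟩) h1.le
  intro x hx hxg
  have : x ∈ Finset.univ.filter (fun x : G => x ∈ X ∧ x⁻¹ * g ∈ Y⁻¹) := by
    simp only [Finset.mem_filter, Finset.mem_univ, true_and, Set.mem_inv, mul_inv_rev,
        inv_inv, mul_comm _ x]
    exact ⟨hx, hxg⟩
  rw [← h2] at this
  simp only [Finset.mem_filter, Finset.mem_univ, true_and, Set.mem_inv, mul_inv_rev,
        inv_inv, mul_comm _ x] at this
  exact this.2

open Classical in
lemma cnt_parity {G : Type*} [CommGroup G] [Fintype G] (X : Set G) (g : G) :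
    ((cnt X X g : ℕ) : ZMod 2) =
      ((Finset.univ.filter (fun x : G => x ∈ X ∧ x ^ 2 = g)).card : ZMod 2) := by
  set s := Finset.univ.filter (fun x : G => x ∈ X ∧ x⁻¹ * g ∈ X) with hs
  have e1 : s.filter (fun x => x ^ 2 = g) =
      Finset.univ.filter (fun x : G => x ∈ X ∧ x ^ 2 = g) := by
    ext x
    simp only [hs, Finset.mem_filter, Finset.mem_univ, true_and]
    constructor
    · rintro ⟨⟨h1, _⟩, h2⟩; exact ⟨h1, h2⟩
    · rintro ⟨h1, rfl⟩
      refine ⟨⟨h1, ?_⟩, rfl⟩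
      rw [pow_two, inv_mul_cancel_left]; exact h1
  have e2 := Finset.card_filter_add_card_filter_not (s := s) (fun x => x ^ 2 = g)
  have e3 : ((s.filter (fun x => ¬ x ^ 2 = g)).card : ZMod 2) = 0 := by
    rw [Finset.card_eq_sum_ones]
    push_cast
    refine Finset.sum_involution (fun x _ => x⁻¹ * g) ?_ ?_ ?_ ?_
    · intro x _; decide
    · intro x hx _ h
      apply (Finset.mem_filter.1 hx).2
      rw [pow_two]
      nth_rewrite 1 [← h]
      simp [mul_comm]
    · intro x hx
      simp only [hs, Finset.mem_filter, Finset.mem_univ, true_and] at hx ⊢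
      obtain ⟨⟨h1, h2⟩, h3⟩ := hx
      refine ⟨⟨h2, by simpa using h1⟩, ?_⟩
      intro h4
      apply h3
      rw [mul_pow, inv_pow, inv_mul_eq_iff_eq_mul, pow_two g] at h4
      exact (mul_right_cancel h4).symm
    · intro x _; simp
  have e4 : cnt X X g = s.card := rfl
  rw [e4, ← e2, e1]
  push_cast
  rw [e3, add_zero]

end SR


namespace SR

lemma exists_invol {G : Type*} [CommGroup G] [Fintype G] {m : ℕ} (hm : Odd m)
    (hc : Fintype.card G = 2 * m) :
    ∃ t : G, t * t = 1 ∧ t ≠ 1 ∧ ∀ x : G, x ^ 2 = 1 → x = 1 ∨ x = t := by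
  have : Fact (Nat.Prime 2) := ⟨Nat.prime_two⟩
  obtain ⟨t, ht⟩ := exists_prime_orderOf_dvd_card (G := G) 2 (by rw [hc]; exact dvd_mul_right _ _)
  have ht2 : t ^ 2 = 1 := by rw [← ht]; exact pow_orderOf_eq_one t
  have ht1 : t ≠ 1 := by
    rintro rfl
    simp at ht
  refine ⟨t, by rw [← pow_two]; exact ht2, ht1, ?_⟩
  let V : Subgroup G := (powMonoidHom 2 : G →* G).ker
  have hV : ∀ x : G, x ∈ V ↔ x ^ 2 = 1 := by
    intro x
    simp [V, MonoidHom.mem_ker]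
  have hp : IsPGroup 2 V := by
    rintro ⟨x, hx⟩
    refine ⟨1, ?_⟩
    ext
    simpa using (hV x).1 hx
  obtain ⟨n, hn⟩ := IsPGroup.iff_card.1 hp
  have hd : Nat.card V ∣ 2 * m := by
    rw [← hc, ← Nat.card_eq_fintype_card]
    exact Subgroup.card_subgroup_dvd_card V
  have hn1 : n ≤ 1 := by
    by_contra hlt
    have h4 : 2 ^ 2 ∣ 2 * m := (pow_dvd_pow 2 (by omega : 2 ≤ n)).trans (hn ▸ hd)
    obtain ⟨k, hk⟩ := hm
    omega
  have hcard : Nat.card V ≤ 2 := by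
    rw [hn]
    calc 2 ^ n ≤ 2 ^ 1 := Nat.pow_le_pow_right (by norm_num) hn1
      _ = 2 := by norm_num
  intro x hx
  by_contra hne
  push Not at hne
  classical
  have hsub : (({1, t, x} : Finset G) : Set G) ⊆ (V : Set G) := by
    intro y hy
    simp only [Finset.coe_insert, Finset.coe_singleton, Set.mem_insert_iff,
      Set.mem_singleton_iff] at hy
    show y ∈ V
    rw [hV]
    rcases hy with rfl | rfl | rfl
    · simp
    · exact ht2
    · exact hx
  have h3 := Set.ncard_le_ncard hsub (Set.toFinite _)
  rw [Set.ncard_coe_finset, Finset.card_eq_three.2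
    ⟨1, t, x, ht1.symm, hne.1.symm, hne.2.symm, rfl⟩] at h3
  have h4 : (V : Set G).ncard = Nat.card V := rfl
  omega

lemma even_of_invol {G : Type*} [CommGroup G] [Fintype G] {t : G} (ht : t * t = 1)
    (ht1 : t ≠ 1) {H : Subgroup G} (h : t ∈ H) : Even (Nat.card H) := by
  have : Fact (Nat.Prime 2) := ⟨Nat.prime_two⟩
  have h2 : orderOf t = 2 := orderOf_eq_prime (by rw [pow_two]; exact ht) ht1
  have := Subgroup.orderOf_dvd_natCard H h
  rw [h2] at this
  exact even_iff_two_dvd.2 this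

lemma invol_mem {G : Type*} [CommGroup G] [Fintype G] {t : G}
    (hV : ∀ x : G, x ^ 2 = 1 → x = 1 ∨ x = t) {H : Subgroup G} (h : Even (Nat.card H)) :
    t ∈ H := by
  have : Fact (Nat.Prime 2) := ⟨Nat.prime_two⟩
  obtain ⟨x, hx⟩ := exists_prime_orderOf_dvd_card' (G := H) 2 (even_iff_two_dvd.1 h)
  have h1 : x ^ 2 = 1 := by rw [← hx]; exact pow_orderOf_eq_one x
  have h2 : (x : G) ^ 2 = 1 := by exact_mod_cast congrArg Subtype.val h1
  rcases hV _ h2 with h3 | h3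
  · have : x = 1 := Subtype.ext h3
    rw [this] at hx
    simp at hx
  · rw [← h3]; exact x.2

lemma root_cases {G : Type*} [CommGroup G] {t : G}
    (hV : ∀ x : G, x ^ 2 = 1 → x = 1 ∨ x = t) {x y : G} (h : x ^ 2 = y ^ 2) :
    x = y ∨ x = t * y := by
  have h1 : (x * y⁻¹) ^ 2 = 1 := by rw [mul_pow, h, inv_pow, mul_inv_cancel]
  rcases hV _ h1 with h2 | h2
  · left; exact mul_inv_eq_one.1 h2
  · right; exact mul_inv_eq_iff_eq_mul.1 h2

lemma sq_inv {G : Type*} [CommGroup G] [Fintype G] {A : SchurRing G} {t : G}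
    (ht : t * t = 1) (ht1 : t ≠ 1) (hV : ∀ x : G, x ^ 2 = 1 → x = 1 ∨ x = t)
    {X : Set G} (hX : Inv A X) :
    Inv A {g | ∃ x, x ^ 2 = g ∧ ¬ (x ∈ X ↔ t * x ∈ X)} := by
  classical
  have key : ∀ g, g ∈ {g | ∃ x, x ^ 2 = g ∧ ¬ (x ∈ X ↔ t * x ∈ X)} ↔
      ((cnt X X g : ℕ) : ZMod 2) = 1 := by
    intro g
    rw [cnt_parity]
    have tsq : ∀ x, (t * x) ^ 2 = x ^ 2 := by
      intro x; rw [mul_pow, pow_two t, ht, one_mul]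
    have tt : ∀ x, t * (t * x) = x := by
      intro x; rw [← mul_assoc, ht, one_mul]
    by_cases hg : ∃ x, x ^ 2 = g
    · obtain ⟨x, rfl⟩ := hg
      have hne : x ≠ t * x := by
        intro h
        exact ht1 (mul_eq_right.1 h.symm)
      have e : Finset.univ.filter (fun y : G => y ∈ X ∧ y ^ 2 = x ^ 2) =
          ({x, t * x} : Finset G).filter (fun y => y ∈ X) := by
        ext y
        simp only [Finset.mem_filter, Finset.mem_univ, true_and, Finset.mem_insert,
          Finset.mem_singleton]
        constructor
        · rintro ⟨h1, h2⟩
          exact ⟨root_cases hV h2, h1⟩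
        · rintro ⟨rfl | rfl, h1⟩
          · exact ⟨h1, rfl⟩
          · exact ⟨h1, tsq x⟩
      have e2 : x ^ 2 ∈ {g | ∃ x, x ^ 2 = g ∧ ¬ (x ∈ X ↔ t * x ∈ X)} ↔
          ¬ (x ∈ X ↔ t * x ∈ X) := by
        constructor
        · rintro ⟨y, hy, h⟩
          rcases root_cases hV hy with rfl | rfl
          · exact h
          · rw [tt] at h
            tauto
        · intro h
          exact ⟨x, rfl, h⟩
      rw [e2, e, Finset.filter_insert, Finset.filter_singleton]
      by_cases h1 : x ∈ X <;> by_cases h2 : t * x ∈ X <;> simp [h1, h2]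
      rw [Finset.card_pair hne]
      decide
    · have e : Finset.univ.filter (fun y : G => y ∈ X ∧ y ^ 2 = g) = ∅ := by
        ext y
        simp only [Finset.mem_filter, Finset.mem_univ, true_and, Finset.notMem_empty, iff_false]
        rintro ⟨_, h⟩
        exact hg ⟨y, h⟩
      rw [e]
      simp only [Set.mem_setOf_eq, Finset.card_empty, Nat.cast_zero, zero_ne_one, iff_false]
      rintro ⟨x, hx, _⟩
      exact hg ⟨x, hx⟩
  intro C hC g hg h hh hgX
  rw [key] at hgX ⊢
  rwa [← cnt_const hX hX hC hg hh]

lemma main {G : Type*} [CommGroup G] [Fintype G] {A : SchurRing G} {m : ℕ} (hm : Odd m)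
    (hc : Fintype.card G = 2 * m) {t : G}
    (ht : t * t = 1) (ht1 : t ≠ 1) (hV : ∀ x : G, x ^ 2 = 1 → x = 1 ∨ x = t)
    {K : Subgroup G} (hKodd : Odd (Nat.card K))
    (hKmax : ∀ K' : Subgroup G, A.isASet (K' : Set G) → Odd (Nat.card K') → K' ≤ K)
    {X : Set G} (hX : Inv A X) (hXK : ∀ x ∈ X, x ∉ K) :
    Inv A {x | x ∈ K ∧ t * x ∈ X} ∧ ∀ x, x ∉ K → t * x ∉ K → (x ∈ X ↔ t * x ∈ X) := by
  have tsq : ∀ x, (t * x) ^ 2 = x ^ 2 := by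
    intro x; rw [mul_pow, pow_two t, ht, one_mul]
  have tt : ∀ x, t * (t * x) = x := by
    intro x; rw [← mul_assoc, ht, one_mul]
  have htm : t ^ m = t := by
    obtain ⟨k, rfl⟩ := hm
    rw [pow_succ, pow_mul, pow_two, ht, one_pow, one_mul]
  have hx2m : ∀ x : G, (x ^ 2) ^ m = 1 := by
    intro x
    rw [← pow_mul, ← hc, pow_card_eq_one]
  have htK : t ∉ K := by
    intro h
    exact (Nat.not_even_iff_odd.2 hKodd) (even_of_invol ht ht1 h)
  have hKm : ∀ x ∈ K, x ^ m = 1 := by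
    intro x hx
    have h1 : (x ^ m) ^ 2 = 1 := by rw [← pow_mul, mul_comm, pow_mul, hx2m]
    rcases hV _ h1 with h2 | h2
    · exact h2
    · exact absurd (h2 ▸ pow_mem hx m) htK
  have htxK : ∀ x ∈ K, t * x ∉ K := by
    intro x hx h
    exact htK ((Subgroup.mul_mem_cancel_right K hx).1 h)
  have hW := sq_inv ht ht1 hV hX
  have hWK : ∀ x, ¬ (x ∈ X ↔ t * x ∈ X) → x ^ 2 ∈ K := by
    intro x hx
    set W : Set G := {g | ∃ x, x ^ 2 = g ∧ ¬ (x ∈ X ↔ t * x ∈ X)} with hWdef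
    refine hKmax (Subgroup.closure W) (isASet_of_inv (inv_closure hW)) ?_
      (Subgroup.subset_closure ⟨x, rfl, hx⟩)
    rw [← Nat.not_even_iff_odd]
    intro he
    have h1 : t ∈ Subgroup.closure W := invol_mem hV he
    have h2 : Subgroup.closure W ≤ (powMonoidHom m : G →* G).ker := by
      rw [Subgroup.closure_le]
      rintro _ ⟨y, rfl, _⟩
      simp [MonoidHom.mem_ker, hx2m]
    have h3 := h2 h1
    rw [MonoidHom.mem_ker, powMonoidHom_apply, htm] at h3
    exact ht1 h3
  have hDK : ∀ x, ¬ (x ∈ X ↔ t * x ∈ X) → x ∈ K ∨ t * x ∈ K := by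
    intro x hx
    have h1 := hWK x hx
    have h2 : x ^ m * x ∈ K := by
      obtain ⟨k, rfl⟩ := hm
      have : x ^ (2 * k + 1) * x = (x ^ 2) ^ (k + 1) := by
        rw [← pow_succ, ← pow_mul]; congr 1
      rw [this]
      exact pow_mem h1 _
    have h3 : (x ^ m) ^ 2 = 1 := by rw [← pow_mul, mul_comm, pow_mul, hx2m]
    rcases hV _ h3 with h4 | h4
    · rw [h4, one_mul] at h2; exact Or.inl h2
    · rw [h4] at h2; exact Or.inr h2
  refine ⟨?_, ?_⟩
  swap
  · intro x h1 h2
    by_contra h3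
    exact (hDK x h3).elim h1 h2
  have hpow : ∀ n : ℕ, Inv A {g | ∃ x, (x ∈ K ∧ t * x ∈ X) ∧ x ^ (2 ^ (n + 1)) = g} := by
    intro n
    induction n with
    | zero =>
      convert hW using 1
      ext g
      simp only [zero_add, pow_one, Set.mem_setOf_eq]
      constructor
      · rintro ⟨x, ⟨h1, h2⟩, h3⟩
        exact ⟨x, h3, fun h => hXK x (h.2 h2) h1⟩
      · rintro ⟨x, rfl, h⟩
        rcases hDK x h with h1 | h1
        · refine ⟨x, ⟨h1, ?_⟩, rfl⟩
          by_contra h2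
          exact h ⟨fun h3 => absurd h1 (hXK x h3), fun h3 => absurd h3 h2⟩
        · refine ⟨t * x, ⟨h1, ?_⟩, tsq x⟩
          rw [tt]
          by_contra h2
          exact h ⟨fun h3 => absurd h3 h2, fun h3 => absurd h1 (hXK _ h3)⟩
    | succ n ih =>
      convert sq_inv ht ht1 hV ih using 1
      have hsub : ∀ y, (∃ x, (x ∈ K ∧ t * x ∈ X) ∧ x ^ (2 ^ (n + 1)) = y) → y ∈ K := by
        rintro _ ⟨x, ⟨h1, _⟩, rfl⟩
        exact pow_mem h1 _
      ext g
      simp only [Set.mem_setOf_eq]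
      constructor
      · rintro ⟨x, hx, rfl⟩
        refine ⟨x ^ (2 ^ (n + 1)), by rw [← pow_mul, ← pow_succ], ?_⟩
        intro h
        exact htxK _ (pow_mem hx.1 _) (hsub _ (h.1 ⟨x, hx, rfl⟩))
      · rintro ⟨y, rfl, h⟩
        by_cases h1 : ∃ x, (x ∈ K ∧ t * x ∈ X) ∧ x ^ (2 ^ (n + 1)) = y
        · obtain ⟨x, hx, rfl⟩ := h1
          exact ⟨x, hx, by rw [← pow_mul, ← pow_succ]⟩
        · have h2 : ∃ x, (x ∈ K ∧ t * x ∈ X) ∧ x ^ (2 ^ (n + 1)) = t * y := by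
            by_contra h2
            exact h ⟨fun h3 => absurd h3 h1, fun h3 => absurd h3 h2⟩
          obtain ⟨x, hx, h3⟩ := h2
          refine ⟨x, hx, ?_⟩
          rw [pow_succ, pow_mul, h3, tsq]
  have hm0 : 0 < m := hm.pos
  obtain ⟨n, hn⟩ : ∃ n, m.totient = n + 1 :=
    Nat.exists_eq_succ_of_ne_zero (Nat.totient_pos.2 hm0).ne'
  have hfix : ∀ x ∈ K, x ^ (2 ^ (n + 1)) = x := by
    intro x hx
    rw [← hn]
    have h1 : 2 ^ m.totient ≡ 1 [MOD m] :=
      Nat.ModEq.pow_totient (Nat.coprime_two_left.2 hm)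
    have h2 : 2 ^ m.totient ≡ 1 [MOD orderOf x] := h1.of_dvd (orderOf_dvd_of_pow_eq_one (hKm x hx))
    have h3 := (pow_eq_pow_iff_modEq (x := x)).2 h2
    rwa [pow_one] at h3
  convert hpow n using 1
  ext g
  simp only [Set.mem_setOf_eq]
  constructor
  · intro h
    exact ⟨g, h, hfix g h.1⟩
  · rintro ⟨x, hx, rfl⟩
    rw [hfix x hx.1]
    exact hx

end SR

theorem stmt13 {G : Type*} [CommGroup G] [Fintype G]
    (htwiceodd : ∃ m : ℕ, Odd m ∧ Fintype.card G = 2 * m)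
    (A : SchurRing G) (Q K : Subgroup G)
    (hQ : A.isASet (Q : Set G)) (hQeven : Even (Nat.card Q))
    (hQmin : ∀ Q' : Subgroup G, A.isASet (Q' : Set G) → Even (Nat.card Q') → Q ≤ Q')
    (hK : A.isASet (K : Set G)) (hKodd : Odd (Nat.card K))
    (hKmax : ∀ K' : Subgroup G, A.isASet (K' : Set G) → Odd (Nat.card K') → K' ≤ K) :
    ((Q : Set G) \ ((Q ⊓ K : Subgroup G) : Set G)) ∈ A.P ∧
    (∀ X ∈ A.P, X ⊆ (K : Set G)ᶜ →
      ∀ x ∈ X, ∀ l ∈ (Q ⊓ K : Subgroup G), l * x ∈ X) := by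
  obtain ⟨m, hm, hc⟩ := htwiceodd
  obtain ⟨t, ht, ht1, hV⟩ := SR.exists_invol hm hc
  have tinv : t⁻¹ = t := inv_eq_of_mul_eq_one_left ht
  have tt : ∀ x, t * (t * x) = x := by
    intro x; rw [← mul_assoc, ht, one_mul]
  have htK : t ∉ K := fun h =>
    (Nat.not_even_iff_odd.2 hKodd) (SR.even_of_invol ht ht1 h)
  have htxK : ∀ x ∈ K, t * x ∉ K := by
    intro x hx h
    exact htK ((Subgroup.mul_mem_cancel_right K hx).1 h)
  have htQ : t ∈ Q := SR.invol_mem hV hQeven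
  have hdis : ∀ X ∈ A.P, ∀ y ∈ X, y ∉ K → ∀ x ∈ X, x ∉ K := by
    intro X hX y hy hyK x hx hxK
    exact hyK (SR.inv_of_isASet hK X hX x hx y hy hxK)
  obtain ⟨T, hT, htT⟩ := A.cover t
  have hTK := hdis T hT t htT htK
  obtain ⟨hS, hTt⟩ := SR.main hm hc ht ht1 hV hKodd hKmax (SR.inv_basic hT) hTK
  set S : Set G := {x | x ∈ K ∧ t * x ∈ T} with hSdef
  have hN : SR.Inv A (T ∪ S) := SR.inv_union (SR.inv_basic hT) hS
  have hNt1 : ∀ x ∈ T ∪ S, t * x ∈ T ∪ S := by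
    rintro x (hx | hx)
    · by_cases h1 : t * x ∈ K
      · exact Or.inr ⟨h1, by rw [tt]; exact hx⟩
      · exact Or.inl ((hTt x (hTK x hx) h1).1 hx)
    · exact Or.inl hx.2
  have hNT : ∀ u ∈ T, ∀ x ∈ T ∪ S, x * u⁻¹ ∈ T ∪ S := by
    intro u hu x hx
    refine SR.count_principle hN hN hT htT hu ?_ x hx ?_
    · intro y hy _
      rw [tinv, mul_comm]; exact hNt1 y hy
    · rw [tinv, mul_comm]; exact hNt1 x hx
  have hNN : ∀ u ∈ T ∪ S, ∀ x ∈ T ∪ S, x * u⁻¹ ∈ T ∪ S := by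
    rintro u (hu | hu) x hx
    · exact hNT u hu x hx
    · have h1 := hNt1 _ (hNT _ hu.2 x hx)
      have h2 : t * (x * (t * u)⁻¹) = x * u⁻¹ := by
        rw [mul_inv_rev, tinv, mul_comm u⁻¹ t, mul_left_comm x t, tt]
      rwa [h2] at h1
  have h1N : (1 : G) ∈ T ∪ S := by
    have := hNN t (Or.inl htT) t (Or.inl htT)
    rwa [mul_inv_cancel] at this
  have hinvN : ∀ u ∈ T ∪ S, u⁻¹ ∈ T ∪ S := by
    intro u hu
    have := hNN u hu 1 h1N
    rwa [one_mul] at this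
  let N : Subgroup G :=
    { carrier := T ∪ S
      one_mem' := h1N
      inv_mem' := fun {u} hu => hinvN u hu
      mul_mem' := fun {a b} ha hb => by
        have := hNN b⁻¹ (hinvN b hb) a ha
        rwa [inv_inv] at this }
  have hQN : Q ≤ N := hQmin N (SR.isASet_of_inv hN)
    (SR.even_of_invol ht ht1 (show t ∈ T ∪ S from Or.inl htT))
  have hTQ : ∀ x ∈ T, x ∈ Q := fun x hx => SR.inv_of_isASet hQ T hT t htT x hx htQ
  have hL : ∀ x, x ∈ Q ⊓ K ↔ x ∈ S := by
    intro x
    constructor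
    · rintro ⟨h1, h2⟩
      rcases hQN h1 with h3 | h3
      · exact absurd h2 (hTK x h3)
      · exact h3
    · intro h
      refine ⟨?_, h.1⟩
      have := mul_mem htQ (hTQ _ h.2)
      rwa [tt] at this
  constructor
  · have : (Q : Set G) \ ((Q ⊓ K : Subgroup G) : Set G) = T := by
      ext x
      constructor
      · rintro ⟨h1, h2⟩
        rcases hQN h1 with h3 | h3
        · exact h3
        · exact absurd ((hL x).2 h3) h2
      · intro h
        exact ⟨hTQ x h, fun h2 => hTK x h h2.2⟩
    rw [this]; exact hT
  · intro X hX hXK x hx l hl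
    have hXK' : ∀ x ∈ X, x ∉ K := fun x hx => hXK hx
    obtain ⟨hY, hXt⟩ := SR.main hm hc ht ht1 hV hKodd hKmax (SR.inv_basic hX) hXK'
    have hl' : l⁻¹ ∈ K ∧ t * l⁻¹ ∈ T := (hL _).1 (inv_mem hl)
    have hlK : l ∈ K := hl.2
    have hr : ∀ y, y * (t * l⁻¹)⁻¹ = t * (l * y) := by
      intro y
      rw [mul_inv_rev, inv_inv, tinv, mul_comm, mul_comm l t, mul_assoc]
    have hr' : ∀ y, y * t⁻¹ = t * y := by
      intro y; rw [tinv, mul_comm]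
    by_cases h1 : t * x ∈ K
    · have := SR.count_principle (SR.inv_basic hX) hY hT htT hl'.2 ?_ x hx ?_
      · rw [hr] at this
        have h2 := this.2
        rwa [tt] at h2
      · intro y hy h2
        rw [hr] at h2
        rw [hr']
        refine ⟨?_, by rw [tt]; exact hy⟩
        have h3 := h2.1
        rw [mul_left_comm] at h3
        exact (Subgroup.mul_mem_cancel_left K hlK).1 h3
      · rw [hr']
        exact ⟨h1, by rw [tt]; exact hx⟩
    · have h2 := SR.count_principle (SR.inv_basic hX) (SR.inv_basic hX) hT htT hl'.2 ?_ x hx ?_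
      · rw [hr] at h2
        have h3 : l * x ∉ K := fun h =>
          hXK' x hx ((Subgroup.mul_mem_cancel_left K hlK).1 h)
        exact (hXt _ h3 (hXK' _ h2)).2 h2
      · intro y hy h2
        rw [hr] at h2
        rw [hr']
        have h3 : t * y ∉ K := by
          intro h
          apply hXK' _ h2
          rw [mul_left_comm]
          exact mul_mem hlK h
        exact (hXt y (hXK' y hy) h3).1 hy
      · rw [hr']
        exact (hXt x (hXK' x hx) h1).1 hx
end

section
/- Let G be an abelian group of composite order having a cyclic Sylow subgroup, and let A be a primitive Schur ring over G (the only A-subgroups are 1 and G). Then A has rank 2, i.e., its basic sets are exactly {1} and G∖{1}. -/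
open scoped Pointwise

namespace SchurAux

open Classical

section
variable {G : Type*} [CommGroup G] [Fintype G]

lemma clsum_coeff (s : Set G) (g : G) :
    (clsum s).coeff g = if g ∈ s then 1 else 0 := by
  simp [clsum, MonoidAlgebra.coeff_sum, Finsupp.finsetSum_apply, Finsupp.single_apply]

lemma const_of_span (A : SchurRing G) {f : MonoidAlgebra ℤ G}
    (hf : f ∈ Submodule.span ℤ (clsum '' A.P)) {X : Set G} (hX : X ∈ A.P) {x y : G}
    (hx : x ∈ X) (hy : y ∈ X) : f.coeff x = f.coeff y := by
  induction hf using Submodule.span_induction with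
  | mem f h =>
    obtain ⟨Y, hY, rfl⟩ := h
    rw [clsum_coeff, clsum_coeff]
    by_cases h : X = Y
    · subst h; simp [hx, hy]
    · have := Set.disjoint_left.1 (A.disj X hX Y hY h)
      simp [this hx, this hy]
  | zero => simp
  | add a b _ _ ha hb => simp [ha, hb]
  | smul c a _ ha => rw [MonoidAlgebra.coeff_smul_apply, MonoidAlgebra.coeff_smul_apply, ha]

lemma span_mul (A : SchurRing G) {f g : MonoidAlgebra ℤ G}
    (hf : f ∈ Submodule.span ℤ (clsum '' A.P)) (hg : g ∈ Submodule.span ℤ (clsum '' A.P)) :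
    f * g ∈ Submodule.span ℤ (clsum '' A.P) := by
  have h := Submodule.mul_mem_mul hf hg
  rw [Submodule.span_mul_span] at h
  refine (Submodule.span_le.2 ?_) h
  rintro _ ⟨_, ⟨X, hX, rfl⟩, _, ⟨Y, hY, rfl⟩, rfl⟩
  exact A.mul_closed X hX Y hY

lemma span_one (A : SchurRing G) : (1 : MonoidAlgebra ℤ G) ∈ Submodule.span ℤ (clsum '' A.P) := by
  refine Submodule.subset_span ⟨_, A.one_mem, ?_⟩
  ext g
  rw [clsum_coeff, MonoidAlgebra.one_def, MonoidAlgebra.coeff_single, Finsupp.single_apply]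
  simp [eq_comm]

lemma span_pow (A : SchurRing G) {f : MonoidAlgebra ℤ G}
    (hf : f ∈ Submodule.span ℤ (clsum '' A.P)) (n : ℕ) :
    f ^ n ∈ Submodule.span ℤ (clsum '' A.P) := by
  induction n with
  | zero => simpa using span_one A
  | succ n ih => rw [pow_succ]; exact span_mul A ih hf

lemma mem_unique (A : SchurRing G) {X Y : Set G} (hX : X ∈ A.P) (hY : Y ∈ A.P) {g : G}
    (h1 : g ∈ X) (h2 : g ∈ Y) : X = Y := by
  by_contra h
  exact Set.disjoint_left.1 (A.disj X hX Y hY h) h1 h2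

/-- A set which is a union of basic sets is an A-set. -/
lemma isASet_of_closed (A : SchurRing G) (U : Set G)
    (h : ∀ X ∈ A.P, ∀ x ∈ X, x ∈ U → X ⊆ U) : A.isASet U := by
  have : clsum U = ∑ X ∈ (Set.toFinite A.P).toFinset.filter (fun X => X ⊆ U), clsum X := by
    ext g
    rw [MonoidAlgebra.coeff_sum, Finsupp.finsetSum_apply]
    simp only [clsum_coeff]
    obtain ⟨X, hX, hg⟩ := A.cover g
    by_cases hU : g ∈ U
    · rw [Finset.sum_eq_single X]
      · simp [hU, hg]
      · intro Y hY hne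
        have hY' : Y ∈ A.P := by simpa using (Finset.mem_filter.1 hY).1
        rw [if_neg]
        intro hgY
        exact hne (mem_unique A hY' hX hgY hg)
      · intro hn
        refine absurd ?_ hn
        rw [Finset.mem_filter]
        exact ⟨by simpa using hX, h X hX g hg hU⟩
    · rw [if_neg hU, Finset.sum_eq_zero]
      intro Y hY
      rw [if_neg]
      exact fun hgY => hU ((Finset.mem_filter.1 hY).2 hgY)
  unfold SchurRing.isASet
  rw [this]
  refine Submodule.sum_mem _ fun X hX => Submodule.subset_span ⟨X, ?_, rfl⟩
  simpa using (Finset.mem_filter.1 hX).1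

/-- coefficients of a product of class sums. -/
lemma mul_coeff (X Y : Set G) (g : G) :
    (clsum X * clsum Y).coeff g
      = ((Finset.univ.filter fun x : G => x ∈ X ∧ x⁻¹ * g ∈ Y).card : ℤ) := by
  have e : clsum X * clsum Y = ∑ x ∈ X.toFinite.toFinset, MonoidAlgebra.single x 1 * clsum Y := by
    conv_lhs => rw [clsum]
    rw [Finset.sum_mul]; rfl
  rw [e, MonoidAlgebra.coeff_sum, Finsupp.finsetSum_apply]
  simp only [MonoidAlgebra.coeff_single_mul_apply, clsum_coeff, one_mul]
  rw [Finset.sum_ite, Finset.sum_const_zero, add_zero, Finset.sum_const, nsmul_one]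
  congr 2
  ext x; simp

lemma mul_closed_set (A : SchurRing G) {X Y Z : Set G} (hX : X ∈ A.P) (hY : Y ∈ A.P)
    (hZ : Z ∈ A.P) {x y z : G} (hx : x ∈ X) (hy : y ∈ Y) (hz : x * y ∈ Z) (hz' : z ∈ Z) :
    ∃ x' ∈ X, ∃ y' ∈ Y, x' * y' = z := by
  have h := const_of_span A (A.mul_closed X hX Y hY) hZ hz hz'
  rw [mul_coeff, mul_coeff] at h
  have h1 : 0 < (Finset.univ.filter fun a : G => a ∈ X ∧ a⁻¹ * (x * y) ∈ Y).card :=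
    Finset.card_pos.2 ⟨x, by simp [hx, hy]⟩
  have h2 : 0 < (Finset.univ.filter fun a : G => a ∈ X ∧ a⁻¹ * z ∈ Y).card := by
    have := Int.ofNat.inj h
    omega
  obtain ⟨a, ha⟩ := Finset.card_pos.1 h2
  simp only [Finset.mem_filter, Finset.mem_univ, true_and] at ha
  exact ⟨a, ha.1, _, ha.2, by simp⟩

/-- The subgroup generated by a union of basic sets is an A-subgroup. -/
lemma isASet_closure (A : SchurRing G) (U : Set G)
    (h : ∀ X ∈ A.P, ∀ x ∈ X, x ∈ U → X ⊆ U) :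
    A.isASet (Subgroup.closure U : Set G) := by
  apply isASet_of_closed
  intro X hX x hx hxU
  have key : ∀ X ∈ A.P, x ∈ X → X ⊆ Subgroup.closure U := by
    clear hx hX X
    rw [SetLike.mem_coe] at hxU
    induction hxU using Subgroup.closure_induction with
    | mem x hxU => exact fun X hX hx => (h X hX x hx hxU).trans Subgroup.subset_closure
    | one =>
      intro X hX hx
      rw [mem_unique A hX A.one_mem hx rfl]
      simp [one_mem]
    | mul a b _ _ ha hb =>
      intro Z hZ hz z hz'
      obtain ⟨X, hX, hx⟩ := A.cover a
      obtain ⟨Y, hY, hy⟩ := A.cover b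
      obtain ⟨x', hx', y', hy', rfl⟩ := mul_closed_set A hX hY hZ hx hy hz hz'
      exact mul_mem (ha X hX hx hx') (hb Y hY hy hy')
    | inv a _ ha =>
      intro X hX hx y hy
      have := ha _ (A.inv_mem X hX) (by simpa using hx) (show y⁻¹ ∈ X⁻¹ by simpa using hy)
      simpa using this
  exact key X hX hx

/-- The autocorrelation of a basic set. -/
noncomputable def ac (X : Set G) (g : G) : ℕ := (Finset.univ.filter fun x : G => x ∈ X ∧ g⁻¹ * x ∈ X).card

lemma ac_const (A : SchurRing G) {X Y : Set G} (hX : X ∈ A.P) (hY : Y ∈ A.P) {g h : G}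
    (hg : g ∈ Y) (hh : h ∈ Y) : ac X g = ac X h := by
  have h := const_of_span A (A.mul_closed X hX _ (A.inv_mem X hX)) hY hg hh
  rw [mul_coeff, mul_coeff] at h
  simpa [ac] using h

lemma ac_le (X : Set G) (g : G) : ac X g ≤ (Finset.univ.filter fun x : G => x ∈ X).card :=
  Finset.card_le_card fun x hx => by
    simp only [Finset.mem_filter, Finset.mem_univ, true_and] at hx ⊢
    exact hx.1

lemma ac_eq (X : Set G) (g : G) : ac X g = (Finset.univ.filter fun x : G => x ∈ X).card ↔
    ∀ x ∈ X, g⁻¹ * x ∈ X := by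
  constructor
  · intro h x hx
    have := Finset.eq_of_subset_of_card_le (s := Finset.univ.filter fun x : G => x ∈ X ∧ g⁻¹ * x ∈ X)
      (t := Finset.univ.filter fun x : G => x ∈ X) (fun x hx => by
        simp only [Finset.mem_filter, Finset.mem_univ, true_and] at hx ⊢
        exact hx.1) h.ge
    have h2 : x ∈ Finset.univ.filter fun x : G => x ∈ X := by simpa using hx
    rw [← this] at h2
    simp only [Finset.mem_filter, Finset.mem_univ, true_and] at h2
    exact h2.2
  · intro h
    unfold ac
    congr 1
    ext x
    simp only [Finset.mem_filter, Finset.mem_univ, true_and]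
    exact ⟨fun h => h.1, fun hx => ⟨hx, h x hx⟩⟩

lemma ac_sum (X : Set G) :
    ∑ g : G, ac X g = (Finset.univ.filter fun x : G => x ∈ X).card ^ 2 := by
  unfold ac
  simp only [Finset.card_filter]
  rw [Finset.sum_comm]
  have : ∀ x : G, ∑ g : G, (if x ∈ X ∧ g⁻¹ * x ∈ X then 1 else 0)
      = if x ∈ X then ∑ y : G, (if y ∈ X then 1 else 0) else 0 := by
    intro x
    by_cases hx : x ∈ X
    · simp only [hx, true_and, if_true]
      exact Fintype.sum_equiv ((Equiv.inv G).trans (Equiv.mulRight x)) _ _ (by intro g; simp)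
    · simp [hx]
  simp only [this]
  rw [← Finset.sum_filter, Finset.sum_const, smul_eq_mul, sq, Finset.card_filter]

lemma ac_inv_mul {X : Set G} {g h x : G} (hg : ∀ x ∈ X, g⁻¹ * x ∈ X) (hh : ∀ x ∈ X, h⁻¹ * x ∈ X)
    (hx : x ∈ X) : (g * h)⁻¹ * x ∈ X := by
  rw [mul_inv_rev, mul_assoc]; exact hh _ (hg _ hx)

/-- A nontrivial basic set invariant under a nontrivial element: impossible. -/
lemma stab_trivial (A : SchurRing G)
    (hprim : ∀ L : Subgroup G, A.isASet (L : Set G) → L = ⊥ ∨ L = ⊤) {X : Set G} (hX : X ∈ A.P)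
    {g : G} (hg : g ≠ 1) (h : ∀ x ∈ X, g⁻¹ * x ∈ X) : False := by
  let U : Set G := {g | ∀ x ∈ X, g⁻¹ * x ∈ X}
  let L : Subgroup G := Subgroup.closure U
  have hcl : ∀ Y ∈ A.P, ∀ y ∈ Y, y ∈ U → Y ⊆ U := by
    intro Y hY y hy hyU z hz
    exact (ac_eq X z).1 ((ac_const A hX hY hz hy).trans ((ac_eq X y).2 hyU))
  have hUX : ∀ u ∈ L, ∀ x ∈ X, u⁻¹ * x ∈ X := by
    intro u hu
    induction hu using Subgroup.closure_induction with
    | mem u hu => exact hu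
    | one => simp
    | mul a b _ _ ha hb => exact fun x hx => ac_inv_mul ha hb hx
    | inv a _ ha =>
      intro x hx
      have hn : ∀ n : ℕ, (a⁻¹) ^ n * x ∈ X := by
        intro n
        induction n with
        | zero => simpa
        | succ n ih => rw [pow_succ', mul_assoc]; exact ha _ ih
      have := hn (orderOf a - 1)
      have e : (a⁻¹) ^ (orderOf a - 1) = a := by
        have h1 := orderOf_pos a
        have h2 : (a⁻¹) ^ (orderOf a - 1) * a⁻¹ = 1 := by
          rw [← pow_succ, Nat.sub_add_cancel h1, inv_pow, pow_orderOf_eq_one, inv_one]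
        simpa using eq_inv_of_mul_eq_one_left h2
      rw [e] at this
      simpa using this
  rcases hprim L (isASet_closure A U hcl) with hL | hL
  · have : g ∈ L := Subgroup.subset_closure h
    rw [hL] at this
    exact hg (by simpa using this)
  · obtain ⟨x, hx⟩ := A.nonempty_cls X hX
    have h1 : (1 : G) ∈ X := by
      have := hUX x (by rw [hL]; trivial) x hx
      simpa using this
    have h2 : X = {1} := mem_unique A hX A.one_mem h1 rfl
    have := h 1 h1
    rw [h2] at this
    simp at this
    exact hg this

lemma pow_coeff (p : ℕ) [hp : Fact p.Prime] (X : Set G) (g : G) :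
    (((clsum X) ^ p).coeff g : ZMod p)
      = ((Finset.univ.filter fun x : G => x ∈ X ∧ x ^ p = g).card : ZMod p) := by
  have : CharP (MonoidAlgebra (ZMod p) G) p :=
    charP_of_injective_algebraMap (algebraMap (ZMod p) (MonoidAlgebra (ZMod p) G)).injective p
  have h1 : MonoidAlgebra.mapRingHom G (Int.castRingHom (ZMod p)) (clsum X ^ p)
      = ∑ x ∈ X.toFinite.toFinset, MonoidAlgebra.single (x ^ p) 1 := by
    rw [map_pow, clsum, map_sum, sum_pow_char]
    refine Finset.sum_congr rfl fun x _ => ?_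
    simp [MonoidAlgebra.single_pow]
  have h2 := congrArg (fun f => f.coeff g) h1
  simp only [MonoidAlgebra.coeff_mapRingHom, MonoidAlgebra.coeff_sum, Finsupp.finsetSum_apply,
    MonoidAlgebra.coeff_single, Finsupp.single_apply] at h2
  rw [Finset.sum_ite, Finset.sum_const_zero, add_zero, Finset.sum_const, nsmul_one] at h2
  have h3 : Finset.filter (fun x => x ^ p = g) X.toFinite.toFinset
      = Finset.univ.filter fun x : G => x ∈ X ∧ x ^ p = g := by ext x; simp
  rw [← h3, ← h2]
  simp

lemma card_N_le (p : ℕ) [hp : Fact p.Prime] (hc : ∀ P : Sylow p G, IsCyclic ↥P) :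
    Nat.card (powMonoidHom p : G →* G).ker ≤ p := by
  have hN : IsPGroup p (powMonoidHom p : G →* G).ker := by
    intro x
    refine ⟨1, ?_⟩
    have := x.2
    rw [MonoidHom.mem_ker] at this
    ext
    simpa using this
  obtain ⟨P, hP⟩ := hN.exists_le_sylow
  have := hc P
  have h1 := IsCyclic.card_pow_eq_one_le (α := P) hp.out.pos
  refine le_trans ?_ h1
  rw [Nat.card_eq_fintype_card]
  refine (Finset.card_le_card_of_injOn (s := Finset.univ)
    (fun x : (powMonoidHom p : G →* G).ker => (⟨x.1, hP x.2⟩ : P)) ?_ ?_)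
  · intro x _
    have := x.2
    rw [MonoidHom.mem_ker] at this
    simp only [Finset.coe_filter, Finset.mem_univ, true_and, Set.mem_ofPred_eq]
    ext
    simpa using this
  · intro x _ y _ h
    exact Subtype.ext (congrArg (fun z : P => (z : G)) h)

lemma coset_sub (p : ℕ) [hp : Fact p.Prime] (hc : ∀ P : Sylow p G, IsCyclic ↥P)
    (hdvd : p ∣ Fintype.card G) (A : SchurRing G)
    (hprim : ∀ L : Subgroup G, A.isASet (L : Set G) → L = ⊥ ∨ L = ⊤) {X : Set G} (hX : X ∈ A.P)
    {x : G} (hx : x ∈ X) (hxp : x ^ p ≠ 1) {h : G} (hh : h ^ p = 1) : h * x ∈ X := by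
  let c : G → ℕ := fun g => (Finset.univ.filter fun x : G => x ∈ X ∧ x ^ p = g).card
  let Z : Set G := {g | ¬ p ∣ c g}
  have hcl : ∀ Y ∈ A.P, ∀ y ∈ Y, y ∈ Z → Y ⊆ Z := by
    intro Y hY y hy hyZ z hz hzd
    apply hyZ
    have h1 := pow_coeff p X y
    have h2 := pow_coeff p X z
    rw [const_of_span A (span_pow A (Submodule.subset_span ⟨X, hX, rfl⟩) p) hY hy hz, h2] at h1
    rw [← ZMod.natCast_eq_zero_iff]
    exact h1.symm.trans ((ZMod.natCast_eq_zero_iff _ _).2 hzd)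
  have hZr : Subgroup.closure Z ≤ (powMonoidHom p : G →* G).range := by
    rw [Subgroup.closure_le]
    intro g hg
    have : c g ≠ 0 := by
      intro h0
      apply hg
      rw [h0]; exact dvd_zero p
    obtain ⟨y, hy⟩ := Finset.card_pos.1 (Nat.pos_of_ne_zero this)
    simp only [Finset.mem_filter, Finset.mem_univ, true_and] at hy
    exact ⟨y, hy.2⟩
  have hbot : Subgroup.closure Z = ⊥ := by
    rcases hprim _ (isASet_closure A Z hcl) with h | h
    · exact h
    · exfalso
      rw [h, top_le_iff, MonoidHom.range_eq_top] at hZr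
      obtain ⟨a, ha⟩ := exists_prime_orderOf_dvd_card p hdvd
      have hinj := Finite.injective_iff_surjective.2 hZr
      have : a = 1 := hinj (by simp [← ha, pow_orderOf_eq_one])
      rw [this, orderOf_one] at ha
      exact hp.out.one_lt.ne ha
  have hnZ : x ^ p ∉ Z := by
    intro hz
    have := Subgroup.subset_closure (k := Z) hz
    rw [hbot] at this
    exact hxp (by simpa using this)
  have hd : p ∣ c (x ^ p) := by
    by_contra h
    exact hnZ h
  have hpos : 0 < c (x ^ p) := Finset.card_pos.2 ⟨x, by simp [hx]⟩
  have hge := Nat.le_of_dvd hpos hd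
  have hle : (Finset.univ.filter fun y : G => y ^ p = x ^ p).card ≤ p := by
    refine le_trans ?_ (card_N_le p hc)
    rw [Nat.card_eq_fintype_card, ← Finset.card_univ]
    have hmem : ∀ y : G, y ^ p = x ^ p → y * x⁻¹ ∈ (powMonoidHom p : G →* G).ker := by
      intro y hy
      rw [MonoidHom.mem_ker, powMonoidHom_apply, mul_pow, hy, inv_pow, mul_inv_cancel]
    refine Finset.card_le_card_of_injOn
      (fun y => if hy : y ^ p = x ^ p then ⟨y * x⁻¹, hmem y hy⟩ else 1) (by simp) ?_
    intro y hy z hz hyz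
    simp only [Finset.coe_filter, Finset.mem_univ, true_and, Set.mem_ofPred_eq] at hy hz
    simpa [hy, hz] using hyz
  have heq := Finset.eq_of_subset_of_card_le
    (s := Finset.univ.filter fun y : G => y ∈ X ∧ y ^ p = x ^ p)
    (t := Finset.univ.filter fun y : G => y ^ p = x ^ p) (fun y hy => by
      simp only [Finset.mem_filter, Finset.mem_univ, true_and] at hy ⊢
      exact hy.2) (hle.trans hge)
  have h2 : h * x ∈ Finset.univ.filter fun y : G => y ^ p = x ^ p := by
    simp [mul_pow, hh]
  rw [← heq] at h2
  simp only [Finset.mem_filter, Finset.mem_univ, true_and] at h2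
  exact h2.1

lemma large (p : ℕ) [hp : Fact p.Prime] (hc : ∀ P : Sylow p G, IsCyclic ↥P)
    (hdvd : p ∣ Fintype.card G) (hne : Fintype.card G ≠ p) (A : SchurRing G)
    (hprim : ∀ L : Subgroup G, A.isASet (L : Set G) → L = ⊥ ∨ L = ⊤) {X : Set G} (hX : X ∈ A.P)
    (hX1 : X ≠ {1}) : Fintype.card G ≤ 2 * (Finset.univ.filter fun x : G => x ∈ X).card := by
  by_contra hlt
  push Not at hlt
  have h1X : (1 : G) ∉ X := fun h => hX1 (mem_unique A hX A.one_mem h rfl)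
  obtain ⟨a, ha⟩ := exists_prime_orderOf_dvd_card p hdvd
  have ha1 : a ≠ 1 := by
    rintro rfl
    rw [orderOf_one] at ha
    exact hp.out.one_lt.ne ha
  have hap : a⁻¹ ^ p = 1 := by rw [inv_pow, ← ha, pow_orderOf_eq_one, inv_one]
  -- every nontrivial basic set meets the kernel of the p-th power map
  have hmeet : ∀ Y ∈ A.P, ∃ h ∈ Y, h ^ p = 1 := by
    intro Y hY
    by_contra hcon
    push Not at hcon
    exact stab_trivial A hprim hY ha1
      fun x hx => coset_sub p hc hdvd A hprim hY hx (hcon x hx) hap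
  let k := (Finset.univ.filter fun x : G => x ∈ X).card
  let x0 := (Finset.univ.filter fun x : G => x ∈ X ∧ x ^ p = 1).card
  let x1 := (Finset.univ.filter fun x : G => x ∈ X ∧ x ^ p ≠ 1).card
  let N := (Finset.univ.filter fun x : G => x ^ p = 1).card
  have hk : k = x0 + x1 := by
    have := Finset.card_filter_add_card_filter_not
      (s := Finset.univ.filter fun x : G => x ∈ X) (fun x => x ^ p = 1)
    rw [Finset.filter_filter, Finset.filter_filter] at this
    exact this.symm
  have hac : ∀ g ∈ (Finset.univ : Finset G).erase 1, x1 ≤ ac X g := by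
    intro g _
    obtain ⟨Y, hY, hg⟩ := A.cover g
    obtain ⟨h, hh, hhp⟩ := hmeet Y hY
    rw [ac_const A hX hY hg hh]
    refine Finset.card_le_card fun x hx => ?_
    simp only [Finset.mem_filter, Finset.mem_univ, true_and] at hx ⊢
    exact ⟨hx.1, coset_sub p hc hdvd A hprim hX hx.1 hx.2 (by rw [inv_pow, hhp, inv_one])⟩
  have hsum := ac_sum X
  rw [← Finset.add_sum_erase _ _ (Finset.mem_univ (1 : G))] at hsum
  have hac1 : ac X 1 = k := (ac_eq X 1).2 (by simp)
  have hb := Finset.card_nsmul_le_sum _ _ _ hac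
  rw [Finset.card_erase_of_mem (Finset.mem_univ _), Finset.card_univ, smul_eq_mul] at hb
  have hx0N : x0 < N := by
    refine Finset.card_lt_card ⟨fun x hx => ?_, fun hsub => ?_⟩
    · simp only [Finset.mem_filter, Finset.mem_univ, true_and] at hx ⊢
      exact hx.2
    · have := hsub (show (1 : G) ∈ _ by simp)
      simp only [Finset.mem_filter, Finset.mem_univ, true_and] at this
      exact h1X this.1
  have hex : ∃ x ∈ X, x ^ p ≠ 1 := by
    by_contra hcon
    push Not at hcon
    have hle : Subgroup.closure X ≤ (powMonoidHom p : G →* G).ker := by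
      rw [Subgroup.closure_le]
      intro x hx
      exact hcon x hx
    rcases hprim _ (isASet_closure A X fun Y hY y hy hyX => (mem_unique A hY hX hy hyX).subset)
      with h | h
    · obtain ⟨x, hx⟩ := A.nonempty_cls X hX
      have := Subgroup.subset_closure (k := X) hx
      rw [h] at this
      have hx1 : x = 1 := by simpa using this
      exact h1X (hx1 ▸ hx)
    · rw [h, top_le_iff] at hle
      have hcard := card_N_le p hc
      rw [hle, Subgroup.card_top, Nat.card_eq_fintype_card] at hcard
      exact hne (le_antisymm hcard (Nat.le_of_dvd Fintype.card_pos hdvd))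
  have hN : N ≤ x1 := by
    obtain ⟨x, hx, hxp⟩ := hex
    refine Finset.card_le_card_of_injOn (fun h => h * x) ?_ ?_
    · intro h hh
      simp only [Finset.coe_filter, Finset.mem_univ, true_and, Set.mem_ofPred_eq] at hh ⊢
      exact ⟨coset_sub p hc hdvd A hprim hX hx hxp hh, by rwa [mul_pow, hh, one_mul]⟩
    · intro h _ h' _ e
      simpa using e
  have hn : 0 < Fintype.card G := Fintype.card_pos
  change 2 * k < _ at hlt
  change _ = k ^ 2 at hsum
  rw [hac1] at hsum
  obtain ⟨m, hm⟩ : ∃ m, Fintype.card G = m + 1 := ⟨_, (Nat.sub_add_cancel hn).symm⟩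
  rw [hm] at hlt hb
  rw [Nat.add_sub_cancel] at hb
  have h2 : k + m * x1 ≤ k ^ 2 := by rw [← hsum]; exact Nat.add_le_add_left hb k
  clear_value k x0 x1 N
  have h3 : 2 * k ≤ m := by omega
  have h4 : k ≤ 2 * x1 := by omega
  have h5 : 0 < k := by omega
  nlinarith

end

end SchurAux

/-- Wielandt: a primitive S-ring over an abelian group of composite order
with a cyclic Sylow subgroup has rank 2. -/
theorem stmt14 {G : Type*} [CommGroup G] [Fintype G]
    (hcomp : ∃ a b : ℕ, 1 < a ∧ 1 < b ∧ Fintype.card G = a * b)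
    (hsyl : ∃ p : ℕ, p.Prime ∧ p ∣ Fintype.card G ∧ ∀ P : Sylow p G, IsCyclic ↥P)
    (A : SchurRing G)
    (hprim : ∀ L : Subgroup G, A.isASet (L : Set G) → L = ⊥ ∨ L = ⊤) :
    A.P = {({1} : Set G), ({1}ᶜ : Set G)} := by
  classical
  obtain ⟨p, hp, hdvd, hc⟩ := hsyl
  have : Fact p.Prime := ⟨hp⟩
  have hne : Fintype.card G ≠ p := by
    obtain ⟨a, b, ha, hb, hab⟩ := hcomp
    intro h
    rw [← h, hab] at hp
    exact Nat.not_prime_mul (by omega) (by omega) hp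
  have key : ∀ X ∈ A.P, X ≠ {1} → X = {1}ᶜ := by
    intro X hX hX1
    have h1X : (1 : G) ∉ X := fun h => hX1 (SchurAux.mem_unique A hX A.one_mem h rfl)
    ext g
    constructor
    · rintro hg rfl
      exact h1X hg
    · intro hg
      obtain ⟨Y, hY, hgY⟩ := A.cover g
      by_cases hXY : X = Y
      · rwa [hXY]
      exfalso
      have hY1 : Y ≠ {1} := by
        rintro rfl
        exact hg hgY
      have h1Y : (1 : G) ∉ Y := fun h => hY1 (SchurAux.mem_unique A hY A.one_mem h rfl)
      have l1 := SchurAux.large p hc hdvd hne A hprim hX hX1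
      have l2 := SchurAux.large p hc hdvd hne A hprim hY hY1
      have hd : Disjoint (Finset.univ.filter fun x : G => x ∈ X)
          (Finset.univ.filter fun x : G => x ∈ Y) := by
        rw [Finset.disjoint_left]
        intro x hx hy
        simp only [Finset.mem_filter, Finset.mem_univ, true_and] at hx hy
        exact hXY (SchurAux.mem_unique A hX hY hx hy)
      have hlt : ((Finset.univ.filter fun x : G => x ∈ X) ∪
          (Finset.univ.filter fun x : G => x ∈ Y)).card < Fintype.card G := by
        refine Finset.card_lt_univ_of_notMem (x := (1 : G)) ?_
        simp [h1X, h1Y]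
      rw [Finset.card_union_of_disjoint hd] at hlt
      have e1 : ∀ (W : Set G) (d1 d2 : DecidablePred fun x : G => x ∈ W),
          (@Finset.filter G (fun x => x ∈ W) d1 Finset.univ).card
            = (@Finset.filter G (fun x => x ∈ W) d2 Finset.univ).card := by
        intro W d1 d2
        congr
      rw [e1 X _ (fun a => Classical.propDecidable _)] at l1 hlt
      rw [e1 Y _ (fun a => Classical.propDecidable _)] at l2 hlt
      omega
  ext X
  simp only [Set.mem_insert_iff, Set.mem_singleton_iff]
  constructor
  · intro hX
    by_cases h : X = {1}
    · exact Or.inl h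
    · exact Or.inr (key X hX h)
  · rintro (rfl | rfl)
    · exact A.one_mem
    · obtain ⟨g, hg⟩ := exists_prime_orderOf_dvd_card p hdvd
      obtain ⟨X, hX, hgX⟩ := A.cover g
      have hX1 : X ≠ {1} := by
        rintro rfl
        rw [Set.mem_singleton_iff] at hgX
        rw [hgX, orderOf_one] at hg
        exact hp.one_lt.ne hg
      rw [← key X hX hX1]
      exact hX
end

section
/- Let G = H × ⟨a⟩ where H is cyclic of order 2n with n > 1 odd, b the unique involution of H, and a of order 2. Let A be a Schur ring over G with Σ_{h∈H} h ∈ A and {a} not an A-set, and let T be the basic set of A containing a. Then T has one of the forms La, La ∪ Lab, or Ma ∪ (M∖L)ab, for subgroups 1 ≤ L < M ≤ H₀, where H₀ is the subgroup of H of order n. -/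
open scoped Pointwise

/-- For X ⊆ H, the subset Xa = {(x,a) : x ∈ X} of G = H × ⟨a⟩. -/
def cosetA {H : Type*} (X : Set H) : Set (H × Multiplicative (ZMod 2)) :=
  (fun h => (h, Multiplicative.ofAdd (1 : ZMod 2))) '' X


namespace S19

universe u

set_option linter.unusedSectionVars false

section basics
variable {H : Type u} [CommGroup H] [Fintype H]

noncomputable def conv {R : Type*} [CommRing R] (f g : H → R) (x : H) : R :=
  ∑ y, f y * g (y⁻¹ * x)

open Classical in
noncomputable def ind (U : Set H) (x : H) : ℤ := if x ∈ U then 1 else 0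

noncomputable def toMA {R : Type*} [CommRing R] (f : H → R) : MonoidAlgebra R H :=
  ∑ x, MonoidAlgebra.single x (f x)

lemma toMA_coeff {R : Type*} [CommRing R] (f : H → R) (x : H) : (toMA f).coeff x = f x := by
  classical
  simp [toMA, MonoidAlgebra.coeff_sum, Finsupp.finsetSum_apply, MonoidAlgebra.coeff_single,
    Finsupp.single_apply]

lemma toMA_conv {R : Type*} [CommRing R] (f g : H → R) :
    toMA (conv f g) = toMA f * toMA g := by
  unfold toMA conv
  rw [Finset.sum_mul_sum]
  have : ∀ z : H, MonoidAlgebra.single z (∑ y, f y * g (y⁻¹ * z))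
      = ∑ y, MonoidAlgebra.single z (f y * g (y⁻¹ * z)) := by
    intro z
    exact map_sum (MonoidAlgebra.singleAddHom z) _ _
  simp_rw [this]
  rw [Finset.sum_comm]
  refine Finset.sum_congr rfl fun y _ => ?_
  rw [← Equiv.sum_comp (Equiv.mulLeft y)]
  simp [MonoidAlgebra.single_mul_single]

/-- the `k+1`-st convolution power -/
noncomputable def cpow {R : Type*} [CommRing R] (f : H → R) : ℕ → H → R
  | 0 => f
  | k + 1 => conv (cpow f k) f

lemma toMA_cpow {R : Type*} [CommRing R] (f : H → R) (k : ℕ) :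
    toMA (cpow f k) = toMA f ^ (k + 1) := by
  induction k with
  | zero => simp [cpow]
  | succ k ih => rw [cpow, toMA_conv, ih, ← pow_succ]

lemma cast_cpow (p : ℕ) (f : H → ℤ) (k : ℕ) (x : H) :
    ((cpow f k x : ℤ) : ZMod p) = cpow (fun y => ((f y : ℤ) : ZMod p)) k x := by
  induction k generalizing x with
  | zero => simp [cpow]
  | succ k ih => simp [cpow, conv, ih]

open Classical in
noncomputable def cnt (U : Set H) (p : ℕ) (x : H) : ℕ :=
  (Finset.univ.filter fun u => u ∈ U ∧ u ^ p = x).card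

lemma frob (p : ℕ) [hp : Fact p.Prime] (U : Set H) (k : ℕ) (hk : k + 1 = p) (x : H) :
    ((cpow (ind U) k x : ℤ) : ZMod p) = (cnt U p x : ℕ) := by
  classical
  rw [cast_cpow, ← toMA_coeff (cpow _ k), toMA_cpow, hk]
  have : CharP (MonoidAlgebra (ZMod p) H) p := by
    apply charP_of_injective_algebraMap (R := ZMod p)
    exact FaithfulSMul.algebraMap_injective _ _
  unfold toMA
  rw [sum_pow_char p]
  simp only [MonoidAlgebra.single_pow, MonoidAlgebra.coeff_sum, Finsupp.finsetSum_apply,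
    MonoidAlgebra.coeff_single, Finsupp.single_apply]
  simp only [cnt, Finset.card_filter, Nat.cast_sum]
  refine Finset.sum_congr rfl fun u _ => ?_
  by_cases h1 : u ∈ U <;> by_cases h2 : u ^ p = x <;> simp [ind, h1, h2, hp.out.ne_zero]

lemma conv_ind (A B : Set H) [DecidablePred fun y => y ∈ A] (x : H)
    [DecidablePred fun y => y ∈ A ∧ y⁻¹ * x ∈ B] :
    conv (ind A) (ind B) x = ((Finset.univ.filter fun y => y ∈ A ∧ y⁻¹ * x ∈ B).card : ℤ) := by
  simp only [conv, Finset.card_filter, Nat.cast_sum]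
  refine Finset.sum_congr rfl fun u _ => ?_
  by_cases h1 : u ∈ A <;> by_cases h2 : u⁻¹ * x ∈ B <;> simp [ind, h1, h2]

end basics

/-- A graded version of a Schur ring over `H × C₂`. -/
structure GR (H : Type u) [CommGroup H] [Fintype H] where
  r : ZMod 2 → H → H → Prop
  inv : ∀ i x y, r i x y → r i x⁻¹ y⁻¹
  one : ∀ x y, r 0 x y → (x = 1 ↔ y = 1)
  mul : ∀ i j (f g : H → ℤ), (∀ x y, r i x y → f x = f y) → (∀ x y, r j x y → g x = g y) →
    ∀ x y, r (i + j) x y → conv f g x = conv f g y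

section gr
variable {H : Type u} [CommGroup H] [Fintype H] (A : GR H)

def GR.W (i : ZMod 2) (f : H → ℤ) : Prop := ∀ x y, A.r i x y → f x = f y
def GR.S (i : ZMod 2) (U : Set H) : Prop := ∀ x y, A.r i x y → (x ∈ U ↔ y ∈ U)

variable {A}

lemma GR.S.W {i : ZMod 2} {U : Set H} (h : A.S i U) : A.W i (ind U) := by
  intro x y hxy
  have := h x y hxy
  by_cases hx : x ∈ U <;> simp_all [ind]

lemma GR.W.S {i : ZMod 2} {f : H → ℤ} (h : A.W i f) (φ : ℤ → Prop) : A.S i {x | φ (f x)} := by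
  intro x y hxy
  simp [h x y hxy]

lemma GR.S.inter {i : ZMod 2} {U V : Set H} (h : A.S i U) (h' : A.S i V) : A.S i (U ∩ V) := by
  intro x y hxy
  simp [h x y hxy, h' x y hxy]

lemma GR.S.diff {i : ZMod 2} {U V : Set H} (h : A.S i U) (h' : A.S i V) : A.S i (U \ V) := by
  intro x y hxy
  simp [h x y hxy, h' x y hxy]

lemma GR.S.union {i : ZMod 2} {U V : Set H} (h : A.S i U) (h' : A.S i V) : A.S i (U ∪ V) := by
  intro x y hxy
  simp [h x y hxy, h' x y hxy]

lemma GR.S.inv {i : ZMod 2} {U : Set H} (h : A.S i U) : A.S i {x | x⁻¹ ∈ U} := by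
  intro x y hxy
  exact h _ _ (A.inv _ _ _ hxy)

lemma GR.S.conv {i j : ZMod 2} {U V : Set H} (h : A.S i U) (h' : A.S j V) :
    A.W (i + j) (conv (ind U) (ind V)) := A.mul _ _ _ _ h.W h'.W

lemma GR.S.mul {i j : ZMod 2} {U V : Set H} (h : A.S i U) (h' : A.S j V) :
    A.S (i + j) {x | ∃ y ∈ U, y⁻¹ * x ∈ V} := by
  classical
  have := (h.conv h').S (fun z => z ≠ 0)
  convert this using 1
  ext x
  simp only [Set.mem_ofPred_eq, conv_ind]
  simp [Finset.filter_eq_empty_iff]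

/-- stabilizer of a set -/
def rad (U : Set H) : Subgroup H where
  carrier := {h | ∀ x, h * x ∈ U ↔ x ∈ U}
  one_mem' := by simp
  mul_mem' := by
    intro a b ha hb x
    rw [mul_assoc, ha, hb]
  inv_mem' := by
    intro a ha x
    rw [← ha]; simp

lemma mem_rad {U : Set H} {h : H} : h ∈ rad U ↔ ∀ x, h * x ∈ U ↔ x ∈ U := Iff.rfl

lemma mem_rad_of {U : Set H} {h : H} (hh : ∀ x ∈ U, h * x ∈ U) : h ∈ rad U := by
  intro x
  refine ⟨fun hx => ?_, hh x⟩
  have : ∀ k : ℕ, ∀ x ∈ U, h ^ k * x ∈ U := by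
    intro k
    induction k with
    | zero => simp
    | succ k ih =>
      intro x hx
      rw [pow_succ, mul_assoc]
      exact ih _ (hh x hx)
  have h2 := this (orderOf h - 1) _ hx
  rwa [← mul_assoc, ← pow_succ, Nat.sub_add_cancel (orderOf_pos h), pow_orderOf_eq_one,
    one_mul] at h2

lemma GR.S.rad {i : ZMod 2} {U : Set H} (h : A.S i U) : A.S 0 (rad U : Set H) := by
  classical
  have := (h.conv h.inv).S (fun z => z = (Finset.univ.filter fun y => y ∈ U).card)
  rw [CharTwo.add_self_eq_zero] at this
  convert this using 1
  ext x
  simp only [Set.mem_ofPred_eq, conv_ind, SetLike.mem_coe]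
  rw [Nat.cast_inj]
  constructor
  · intro hx
    congr 1
    ext y
    simp only [Finset.mem_filter, Finset.mem_univ, true_and, mul_inv, inv_inv]
    have := (inv_mem hx : x⁻¹ ∈ S19.rad U) y
    rw [mul_comm y, this, and_self]
  · intro hx
    rw [← inv_mem_iff]
    apply mem_rad_of
    intro y hy
    have := Finset.eq_of_subset_of_card_le (s := Finset.univ.filter fun y => y ∈ U ∧ (y⁻¹ * x)⁻¹ ∈ U)
      (t := Finset.univ.filter fun y => y ∈ U) (by intro z; simp +contextual) hx.ge
    have hy' : y ∈ Finset.univ.filter fun y => y ∈ U := by simpa using hy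
    rw [← this] at hy'
    simp only [Finset.mem_filter, mul_inv, inv_inv] at hy'
    rw [mul_comm]; exact hy'.2.2

lemma GR.S.closure {U : Set H} (h : A.S 0 U) (hs : ∀ x ∈ U, x⁻¹ ∈ U) :
    A.S 0 (Subgroup.closure U : Set H) := by
  have hK : ∀ K : Set H, A.S 0 K → A.S 0 {x | ∃ y ∈ K, y⁻¹ * x ∈ U} := by
    intro K hK
    have := hK.mul h
    simpa using this
  let K : ℕ → Set H := fun k => Nat.rec {1} (fun _ K => {x | ∃ y ∈ K, y⁻¹ * x ∈ U}) k
  have K0 : K 0 = {1} := rfl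
  have K1 : ∀ k, K (k+1) = {x | ∃ y ∈ K k, y⁻¹ * x ∈ U} := fun _ => rfl
  have hKS : ∀ k, A.S 0 (K k) := by
    intro k
    induction k with
    | zero => intro x y hxy; simpa [K0] using A.one x y hxy
    | succ k ih => rw [K1]; exact hK _ ih
  have key : ∀ x, x ∈ Subgroup.closure U ↔ ∃ k, x ∈ K k := by
    intro x
    constructor
    · intro hx
      induction hx using Subgroup.closure_induction_right with
      | one => exact ⟨0, by simp [K0]⟩
      | mul_right x hx y hy ih =>
        obtain ⟨k, hk⟩ := ih
        exact ⟨k + 1, x, hk, by simpa using hy⟩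
      | mul_inv_cancel x hx y hy ih =>
        obtain ⟨k, hk⟩ := ih
        exact ⟨k + 1, x, hk, by simpa using hs y hy⟩
    · rintro ⟨k, hk⟩
      induction k generalizing x with
      | zero => rw [K0] at hk; rw [hk]; exact one_mem _
      | succ k ih =>
        obtain ⟨y, hy, hyx⟩ := hk
        have := mul_mem (ih y hy) (Subgroup.subset_closure hyx)
        simpa using this
  intro x y hxy
  simp only [SetLike.mem_coe, key]
  exact exists_congr fun k => hKS k x y hxy

lemma GR.S.cpow {U : Set H} (h : A.S 1 U) (k : ℕ) : A.W 1 (cpow (ind U) (2 * k)) := by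
  induction k with
  | zero => exact h.W
  | succ k ih =>
    have h1 := A.mul _ _ _ _ ih h.W
    have h2 := A.mul _ _ _ _ h1 h.W
    exact h2

/-- `U` is the basic set of degree one containing `1`. -/
structure GR.Atom (A : GR H) (U : Set H) : Prop where
  one : 1 ∈ U
  set : A.S 1 U
  const : ∀ f, A.W 1 f → ∀ x ∈ U, f x = f 1

/-- counting points of `U` in cosets of an `A`-subgroup -/
lemma GR.Atom.coset {U : Set H} (hU : A.Atom U) {V : Subgroup H} (hV : A.S 0 (V : Set H))
    {x : H} (hx : x ∈ U) : (∀ v ∈ V, x * v ∈ U) ↔ ∀ v ∈ V, v ∈ U := by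
  classical
  have h1 := hU.const _ (hU.set.conv hV) x hx
  rw [conv_ind, conv_ind, Nat.cast_inj] at h1
  have key : ∀ z : H, (∀ v ∈ V, z * v ∈ U) ↔
      (Finset.univ.filter fun v => v ∈ V).card ≤
        (Finset.univ.filter fun y => y ∈ U ∧ y⁻¹ * z ∈ (V : Set H)).card := by
    intro z
    have e : (Finset.univ.filter fun y => y ∈ U ∧ y⁻¹ * z ∈ (V : Set H)).card =
        (Finset.univ.filter fun v => v ∈ V ∧ z * v ∈ U).card := by
      apply Finset.card_bij' (fun y _ => z⁻¹ * y) (fun v _ => z * v)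
      · intro y hy
        simp only [Finset.mem_filter, Finset.mem_univ, true_and, SetLike.mem_coe] at hy ⊢
        refine ⟨?_, by simpa using hy.1⟩
        rw [← inv_mem_iff]; simpa using hy.2
      · intro y hy
        simp only [Finset.mem_filter, Finset.mem_univ, true_and, SetLike.mem_coe] at hy ⊢
        refine ⟨hy.2, ?_⟩
        rw [← inv_mem_iff]; simpa using hy.1
      · intro y hy; simp
      · intro y hy; simp
    rw [e]
    constructor
    · intro h
      apply Finset.card_le_card
      intro v; simp only [Finset.mem_filter, Finset.mem_univ, true_and]
      exact fun hv => ⟨hv, h v hv⟩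
    · intro h v hv
      have := Finset.eq_of_subset_of_card_le (s := Finset.univ.filter fun v => v ∈ V ∧ z * v ∈ U)
        (t := Finset.univ.filter fun v => v ∈ V) (by intro z; simp +contextual) h
      have hv' : v ∈ Finset.univ.filter fun v => v ∈ V := by simpa using hv
      rw [← this] at hv'
      simp only [Finset.mem_filter] at hv'
      exact hv'.2.2
  rw [key x, h1, ← key 1]
  simp

end gr

section rational
variable {H : Type u} [CommGroup H] [Fintype H]

lemma mem_zpowers_of_orderOf [IsCyclic H] {x y : H} (h : orderOf y = orderOf x) :
    y ∈ Subgroup.zpowers x := by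
  classical
  have h1 := IsCyclic.card_pow_eq_one_le (α := H) (orderOf_pos x)
  have hsub : (Finset.univ.filter fun a => a ∈ Subgroup.zpowers x) ⊆
      Finset.univ.filter fun a : H => a ^ orderOf x = 1 := by
    intro a
    simp only [Finset.mem_filter, Finset.mem_univ, true_and]
    intro ha
    rw [← orderOf_dvd_iff_pow_eq_one]
    exact orderOf_dvd_of_mem_zpowers ha
  have hc : (Finset.univ.filter fun a => a ∈ Subgroup.zpowers x).card = orderOf x := by
    rw [← Nat.card_zpowers, Nat.card_eq_fintype_card, Fintype.card_subtype]
  have := Finset.eq_of_subset_of_card_le hsub (by rw [hc]; exact h1)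
  have hy : y ∈ Finset.univ.filter fun a : H => a ^ orderOf x = 1 := by
    simp [← h, pow_orderOf_eq_one]
  rw [← this] at hy
  simpa using hy

variable {A : GR H} {U : Set H}

lemma prime_pow_mem (hU : A.Atom U) {q : ℕ} (hq : q.Prime) (hq2 : q ≠ 2)
    (hqH : ¬ q ∣ Fintype.card H) {x : H} (hx : x ∈ U) : x ^ q ∈ U := by
  classical
  have := Fact.mk hq
  have hodd := hq.odd_of_ne_two hq2
  obtain ⟨k, hk⟩ := hodd
  have hinj : Function.Injective fun x : H => x ^ q := by
    apply Nat.Coprime.pow_left_bijective (G := H) _ |>.injective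
    rw [Nat.card_eq_fintype_card]
    exact ((Nat.Prime.coprime_iff_not_dvd hq).2 hqH).symm
  have hW := hU.set.cpow k
  have hsub : U ⊆ (fun x : H => x ^ q) '' U := by
    intro y hy
    have h1 := hU.const _ hW y hy
    have h2 := congrArg (fun z : ℤ => (z : ZMod q)) h1
    simp only [frob q U (2 * k) hk.symm] at h2
    have h3 : cnt U q (1 : H) = 1 := by
      rw [cnt, Finset.card_eq_one]
      refine ⟨1, ?_⟩
      ext u
      simp only [Finset.mem_filter, Finset.mem_univ, true_and, Finset.mem_singleton]
      constructor
      · rintro ⟨_, hu⟩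
        apply hinj; simpa using hu
      · rintro rfl; exact ⟨hU.one, one_pow _⟩
    rw [h3] at h2
    have h4 : cnt U q y ≠ 0 := by
      intro h0; rw [h0] at h2; simp at h2
    rw [cnt, Finset.card_ne_zero] at h4
    obtain ⟨u, hu⟩ := h4
    simp only [Finset.mem_filter, Finset.mem_univ, true_and] at hu
    exact ⟨u, hu.1, hu.2⟩
  have := Set.eq_of_subset_of_ncard_le hsub (Set.ncard_image_le (Set.toFinite _)) (Set.toFinite _)
  rw [this]
  exact ⟨x, hx, rfl⟩

lemma rational [IsCyclic H] (hU : A.Atom U) {x y : H} (hx : x ∈ U)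
    (h : orderOf y = orderOf x) : y ∈ U := by
  have hy := mem_zpowers_of_orderOf h
  rw [← mem_powers_iff_mem_zpowers] at hy
  obtain ⟨m, rfl⟩ := hy
  simp only at h
  have hco : m.Coprime (orderOf x) := by
    rw [orderOf_pow] at h
    have hpos := orderOf_pos x
    have hd := Nat.gcd_dvd_left (orderOf x) m
    have := Nat.div_mul_cancel hd
    rw [h] at this
    have : (orderOf x).gcd m = 1 := by
      apply Nat.eq_of_mul_eq_mul_left hpos; linarith
    exact Nat.Coprime.symm this
  obtain ⟨q, hqgt, hq, hqm⟩ := Nat.forall_exists_prime_gt_and_modEq (2 + Fintype.card H)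
    (orderOf_pos x).ne' hco
  have : x ^ m = x ^ q := pow_eq_pow_iff_modEq.2 hqm.symm
  simp only [this]
  refine prime_pow_mem hU hq (by omega) ?_ hx
  intro hd
  have := Nat.le_of_dvd Fintype.card_pos hd
  omega

end rational

section padic
variable {H : Type u} [CommGroup H] [Fintype H] {p : ℕ} [hp : Fact p.Prime]

open Classical in
noncomputable def fib (p : ℕ) (x : H) : Finset H := Finset.univ.filter fun u => u ^ p = x

lemma fib_card [IsCyclic H] (hpH : p ∣ Fintype.card H) (u : H) : (fib p (u ^ p)).card = p := by
  classical
  have e1 : (fib p (u ^ p)).card = (Finset.univ.filter fun a : H => a ^ p = 1).card := by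
    apply Finset.card_bij' (fun y _ => u⁻¹ * y) (fun v _ => u * v)
    · intro y hy
      simp only [fib, Finset.mem_filter, Finset.mem_univ, true_and] at hy ⊢
      rw [mul_pow, hy, inv_pow, inv_mul_cancel]
    · intro y hy
      simp only [fib, Finset.mem_filter, Finset.mem_univ, true_and] at hy ⊢
      rw [mul_pow, hy, mul_one]
    · intro y hy; simp
    · intro y hy; simp
  rw [e1]
  apply le_antisymm (IsCyclic.card_pow_eq_one_le hp.out.pos)
  obtain ⟨e, he⟩ := exists_prime_orderOf_dvd_card p hpH
  calc p = Nat.card (Subgroup.zpowers e) := by rw [Nat.card_zpowers, he]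
    _ = (Finset.univ.filter fun a => a ∈ Subgroup.zpowers e).card := by
      rw [Nat.card_eq_fintype_card, Fintype.card_subtype]
    _ ≤ _ := by
      apply Finset.card_le_card
      intro a
      simp only [Finset.mem_filter, Finset.mem_univ, true_and]
      intro ha
      rw [← orderOf_dvd_iff_pow_eq_one, ← he]
      exact orderOf_dvd_of_mem_zpowers ha

lemma cnt_eq (U : Set H) [DecidablePred fun u => u ∈ U] (x : H) :
    cnt U p x = ((fib p x).filter fun u => u ∈ U).card := by
  classical
  rw [cnt, fib, Finset.filter_filter]
  congr 1
  ext; simp [and_comm]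

lemma fact_a [IsCyclic H] (hpH : p ∣ Fintype.card H) {U : Set H} {u : H} (hu : u ∈ U)
    (h : (cnt U p (u ^ p) : ZMod p) = 0) {v : H} (hv : v ^ p = u ^ p) : v ∈ U := by
  classical
  rw [cnt_eq, ZMod.natCast_eq_zero_iff] at h
  have hpos : 0 < ((fib p (u ^ p)).filter fun u => u ∈ U).card :=
    Finset.card_pos.2 ⟨u, by simp [fib, hu]⟩
  have h1 := Nat.le_of_dvd hpos h
  have := Finset.eq_of_subset_of_card_le (Finset.filter_subset (fun u => u ∈ U) (fib p (u ^ p)))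
    (by rw [fib_card hpH]; exact h1)
  have hv' : v ∈ fib p (u ^ p) := by simpa [fib] using hv
  rw [← this] at hv'
  exact (Finset.mem_filter.1 hv').2

lemma fact_d {U : Set H} {x : H} (h : ∀ v, v ^ p = x → v ∉ U) :
    cnt U p x = 0 := by
  classical
  rw [cnt, Finset.card_eq_zero, Finset.filter_eq_empty_iff]
  intro v _ hv
  exact h v hv.2 hv.1

lemma fact_b [IsCyclic H] (hpH : p ∣ Fintype.card H) {U : Set H} {u : H}
    (h : ∀ v, v ^ p = u ^ p → v ∈ U) : (cnt U p (u ^ p) : ZMod p) = 0 := by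
  classical
  rw [cnt_eq, Finset.filter_true_of_mem, fib_card hpH]
  · simp
  · intro v hv
    exact h v (by simpa [fib] using hv)

lemma fact_c [IsCyclic H] (hpH : p ∣ Fintype.card H) {U : Set H} {u : H} (hu : u ∉ U)
    (h : ∀ v, v ^ p = u ^ p → v ≠ u → v ∈ U) : (cnt U p (u ^ p) : ZMod p) ≠ 0 := by
  classical
  have h1 : (fib p (u ^ p)).filter (fun u => u ∈ U) = (fib p (u ^ p)).erase u := by
    ext v
    simp only [Finset.mem_filter, Finset.mem_erase]
    constructor
    · rintro ⟨h1, h2⟩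
      exact ⟨fun e => hu (e ▸ h2), h1⟩
    · rintro ⟨h1, h2⟩
      exact ⟨h2, h v (by simpa [fib] using h2) h1⟩
  have h2 : ((fib p (u ^ p)).erase u).card + 1 = p := by
    rw [Finset.card_erase_add_one (by simp [fib]), fib_card hpH]
  rw [cnt_eq, h1]
  intro h0
  have h3 := congrArg (fun z : ℕ => (z : ZMod p)) h2
  simp [h0] at h3

lemma ordp {w : H} (h : p ∣ orderOf (w ^ p)) : orderOf w = p * orderOf (w ^ p) := by
  have h1 : p ∣ orderOf w := h.trans (orderOf_pow_dvd p)
  rw [orderOf_pow, Nat.gcd_eq_right h1, Nat.mul_div_cancel' h1]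

lemma ordeq {u v : H} (h : p ∣ orderOf (u ^ p)) (hv : v ^ p = u ^ p) :
    orderOf v = orderOf u := by
  rw [ordp h, ordp (w := v) (by rwa [hv]), hv]

lemma ordmul {y z : H} (hy : ¬ p ∣ orderOf y) (hz : z ^ p = 1) (hz1 : z ≠ 1) :
    orderOf (y * z) = orderOf y * p := by
  have h := orderOf_eq_prime hz hz1
  rw [(Commute.all y z).orderOf_mul_eq_mul_orderOf_of_coprime, h]
  rw [h]
  exact ((Nat.Prime.coprime_iff_not_dvd hp.out).2 hy).symm

lemma proot {y : H} (hy : ¬ p ∣ orderOf y) : ∃ y₁ : H, y₁ ^ p = y ∧ orderOf y₁ = orderOf y := by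
  obtain ⟨m, hm⟩ := exists_pow_eq_self_of_coprime ((Nat.Prime.coprime_iff_not_dvd hp.out).2 hy)
  have h1 : (y ^ m) ^ p = y := by rw [← pow_mul, mul_comm, pow_mul, hm]
  refine ⟨y ^ m, h1, Nat.dvd_antisymm (orderOf_pow_dvd m) ?_⟩
  conv_lhs => rw [← h1]
  exact orderOf_pow_dvd p

lemma padic_main [IsCyclic H] {A : GR H} {U : Set H} (hU : A.Atom U) (hp2 : p ≠ 2)
    (hpH : p ∣ Fintype.card H) :
    (∀ x ∈ U, ¬ p ∣ orderOf x) ∨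
    ∃ Q : Set H, A.S 1 Q ∧ (∀ x ∈ Q, ¬ p ∣ orderOf x) ∧ ∃ e : H, orderOf e = p ∧ e ∈ rad (U ∪ Q) := by
  classical
  have hr : ∀ {x y : H}, x ∈ U → orderOf y = orderOf x → y ∈ U := fun hx h => rational hU hx h
  obtain ⟨k, hk⟩ := hp.out.odd_of_ne_two hp2
  have hW := hU.set.cpow k
  set g : H → ZMod p := fun x => (cnt U p x : ZMod p) with hg
  have hfg : ∀ x, ((cpow (ind U) (2 * k) x : ℤ) : ZMod p) = g x := fun x =>
    frob p U (2 * k) hk.symm x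
  have hgU : ∀ x ∈ U, g x = g 1 := by
    intro x hx
    rw [← hfg, ← hfg, hU.const _ hW x hx]
  have hQ : ∀ x, g x ≠ 0 → ¬ p ∣ orderOf x := by
    intro x hx hd
    apply hx
    by_cases hex : ∃ u ∈ U, u ^ p = x
    · obtain ⟨u, hu, rfl⟩ := hex
      exact fact_b hpH fun v hv => hr hu (ordeq hd hv)
    · push Not at hex
      simp only [hg]
      rw [fact_d fun v hv hvU => hex v hvU hv]
      simp
  by_cases h1 : g 1 = 0
  swap
  · left
    intro x hx
    apply hQ
    rwa [hgU x hx]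
  right
  have hQS : A.S 1 {x | g x ≠ 0} := by
    have := hW.S (fun z => ((z : ℤ) : ZMod p) ≠ 0)
    simpa [hfg] using this
  have hi : ∀ y ∈ U, ¬ p ∣ orderOf y → ∀ z : H, z ^ p = 1 → y * z ∈ U := by
    intro y hy hyp z hz
    obtain ⟨y₁, hy1, ho⟩ := proot hyp
    by_cases hz1 : z = 1
    · simpa [hz1] using hy
    have hy1U : y₁ ∈ U := hr hy ho
    have : y₁ * z ∈ U := by
      apply fact_a hpH hy1U
      · rw [hy1]; exact (hgU y hy).trans h1
      · rw [mul_pow, hz, mul_one]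
    refine hr this ?_
    rw [ordmul hyp hz hz1, ordmul (by rwa [ho]) hz hz1, ho]
  have hii : ∀ y, y ∉ U → ¬ p ∣ orderOf y → ∀ z : H, z ^ p = 1 → y * z ∈ U →
      ∀ z' : H, z' ^ p = 1 → y * z' ∈ U ∪ {x | g x ≠ 0} := by
    intro y hy hyp z hz hyz z' hz'
    have hz1 : z ≠ 1 := by rintro rfl; simp at hyz; exact hy hyz
    by_cases hz'1 : z' = 1
    · right
      obtain ⟨y₁, hy1, ho⟩ := proot hyp
      have hy1U : y₁ ∉ U := fun h => hy (hr h ho.symm)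
      simp only [hz'1, mul_one, Set.mem_ofPred_eq, hg]
      rw [← hy1]
      apply fact_c hpH hy1U
      intro v hv hvne
      have hw : (y₁⁻¹ * v) ^ p = 1 := by rw [mul_pow, hv, inv_pow, inv_mul_cancel]
      have hw1 : y₁⁻¹ * v ≠ 1 := by
        intro h; apply hvne; rw [inv_mul_eq_one] at h; exact h.symm
      refine hr hyz ?_
      have := ordmul (y := y₁) (by rwa [ho]) hw hw1
      rw [mul_inv_cancel_left] at this
      rw [this, ordmul hyp hz hz1, ho]
    · left
      refine hr hyz ?_
      rw [ordmul hyp hz hz1, ordmul hyp hz' hz'1]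
  obtain ⟨e, he⟩ := exists_prime_orderOf_dvd_card p hpH
  have hep : e ^ p = 1 := by rw [← he]; exact pow_orderOf_eq_one e
  refine ⟨{x | g x ≠ 0}, hQS, hQ, e, he, mem_rad_of ?_⟩
  intro x hx
  rw [mul_comm]
  by_cases hxU : x ∈ U
  · by_cases hxp : p ∣ orderOf (x ^ p)
    · left
      exact hr hxU (ordeq hxp (by rw [mul_pow, hep, mul_one]))
    · obtain ⟨y, hy1, ho⟩ := proot hxp
      have hyp : ¬ p ∣ orderOf y := by rwa [ho]
      have hz : (y⁻¹ * x) ^ p = 1 := by rw [mul_pow, ← hy1, inv_pow, inv_mul_cancel]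
      have hz' : (y⁻¹ * x * e) ^ p = 1 := by rw [mul_pow, hz, hep, mul_one]
      have heq : x * e = y * (y⁻¹ * x * e) := by rw [← mul_assoc, mul_inv_cancel_left]
      rw [heq]
      by_cases hyU : y ∈ U
      · left; exact hi y hyU hyp _ hz'
      · exact hii y hyU hyp _ hz (by rwa [mul_inv_cancel_left]) _ hz'
  · have hxQ : g x ≠ 0 := hx.resolve_left hxU
    have hxp := hQ x hxQ
    have hex : ∃ u ∈ U, u ^ p = x := by
      by_contra hex
      push Not at hex
      apply hxQ
      simp only [hg]
      rw [fact_d fun v hv hvU => hex v hvU hv]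
      simp
    obtain ⟨u, hu, hux⟩ := hex
    obtain ⟨y, hy1, ho⟩ := proot hxp
    have hyU : y ∉ U := fun h => hxU (hr h ho.symm)
    have hw : (y⁻¹ * u) ^ p = 1 := by rw [mul_pow, hux, inv_pow, hy1, inv_mul_cancel]
    have hw1 : y⁻¹ * u ≠ 1 := by
      intro h; rw [inv_mul_eq_one] at h; rw [h] at hyU; exact hyU hu
    have hxw : x * (y⁻¹ * u) ∈ U := by
      refine hr hu ?_
      have := ordmul (y := y) (by rwa [ho]) hw hw1
      rw [mul_inv_cancel_left] at this
      rw [this, ordmul hxp hw hw1, ho]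
    exact hii x hxU hxp _ hw hxw _ hep

end padic

section quot
variable {H : Type u} [CommGroup H] [Fintype H]

lemma sum_quot (N : Subgroup H) [Fintype (H ⧸ N)] (F : H ⧸ N → ℤ) :
    ∑ y : H, F (QuotientGroup.mk y) = (Nat.card N : ℤ) * ∑ q, F q := by
  classical
  rw [← Finset.sum_fiberwise (s := Finset.univ) (g := fun y : H => (QuotientGroup.mk y : H ⧸ N)),
    Finset.mul_sum]
  refine Finset.sum_congr rfl fun q _ => ?_
  rw [Finset.sum_congr rfl (g := fun _ => F q)
    (fun y hy => by rw [(Finset.mem_filter.1 hy).2])]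
  rw [Finset.sum_const, nsmul_eq_mul]
  congr 2
  rw [Nat.card_eq_fintype_card, Fintype.card_subtype]
  obtain ⟨z, rfl⟩ := QuotientGroup.mk_surjective q
  apply Finset.card_bij' (fun y _ => z⁻¹ * y) (fun v _ => z * v)
  · intro y hy
    simp only [Finset.mem_filter, Finset.mem_univ, true_and] at hy ⊢
    exact QuotientGroup.eq.1 hy.symm
  · intro y hy
    simp only [Finset.mem_filter, Finset.mem_univ, true_and] at hy ⊢
    symm
    rw [QuotientGroup.eq]
    simpa using hy
  · intro y hy; simp
  · intro y hy; simp

lemma conv_quot (N : Subgroup H) [Fintype (H ⧸ N)] (f g : H ⧸ N → ℤ) (x : H) :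
    conv (fun y : H => f (QuotientGroup.mk y)) (fun y : H => g (QuotientGroup.mk y)) x =
      (Nat.card N : ℤ) * conv f g (QuotientGroup.mk x) := by
  unfold conv
  rw [← sum_quot N (fun y => f y * g (y⁻¹ * QuotientGroup.mk x))]
  rfl

def GR.quot (A : GR H) (N : Subgroup H) (hN : A.S 0 (N : Set H)) [Fintype (H ⧸ N)] :
    GR (H ⧸ N) where
  r i u v := ∃ x y : H, A.r i x y ∧ QuotientGroup.mk x = u ∧ QuotientGroup.mk y = v
  inv := by
    rintro i _ _ ⟨x, y, h, rfl, rfl⟩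
    exact ⟨x⁻¹, y⁻¹, A.inv _ _ _ h, rfl, rfl⟩
  one := by
    rintro _ _ ⟨x, y, h, rfl, rfl⟩
    simpa using hN x y h
  mul := by
    rintro i j f g hf hg _ _ ⟨x, y, h, rfl, rfl⟩
    have := A.mul i j (fun y : H => f (QuotientGroup.mk y)) (fun y : H => g (QuotientGroup.mk y))
      (fun x y h => hf _ _ ⟨x, y, h, rfl, rfl⟩) (fun x y h => hg _ _ ⟨x, y, h, rfl, rfl⟩) x y h
    rw [conv_quot, conv_quot] at this
    have hpos : (Nat.card N : ℤ) ≠ 0 := by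
      have : Nat.card N ≠ 0 := Nat.card_pos.ne'
      exact_mod_cast this
    exact mul_left_cancel₀ hpos this

lemma mem_image_iff {N : Subgroup H} {U : Set H} {x : H} :
    (QuotientGroup.mk x : H ⧸ N) ∈ (QuotientGroup.mk '' U : Set (H ⧸ N)) ↔
      x ∈ {x | ∃ y ∈ U, y⁻¹ * x ∈ (N : Set H)} := by
  simp only [Set.mem_image, QuotientGroup.eq, Set.mem_ofPred_eq, SetLike.mem_coe]

lemma GR.Atom.quot {A : GR H} {U : Set H} (hU : A.Atom U) (N : Subgroup H)
    (hN : A.S 0 (N : Set H)) [Fintype (H ⧸ N)] :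
    (A.quot N hN).Atom (QuotientGroup.mk '' U) where
  one := ⟨1, hU.one, rfl⟩
  set := by
    rintro _ _ ⟨x, y, h, rfl, rfl⟩
    rw [mem_image_iff, mem_image_iff]
    have := hU.set.mul hN
    rw [add_zero] at this
    exact this x y h
  const := by
    rintro f hf _ ⟨x, hx, rfl⟩
    exact hU.const (fun x : H => f (QuotientGroup.mk x))
      (fun x y h => hf _ _ ⟨x, y, h, rfl, rfl⟩) x hx

end quot

section main
variable {H : Type u} [CommGroup H] [Fintype H]

/-- extracting the involution -/
lemma invol (h4 : ¬ 4 ∣ Fintype.card H) {q : H} (hq : Even (orderOf q)) :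
    ∃ b k, b = q ^ (2 * k + 1) ∧ b * b = 1 := by
  obtain ⟨m, hm⟩ := hq
  have hmodd : Odd m := by
    rw [← Nat.not_even_iff_odd]
    rintro ⟨l, hl⟩
    apply h4
    refine Dvd.dvd.trans ⟨l, ?_⟩ (orderOf_dvd_card (x := q))
    omega
  obtain ⟨k, hk⟩ := hmodd
  refine ⟨_, k, rfl, ?_⟩
  rw [← pow_add, ← hk, ← hm, pow_orderOf_eq_one]

lemma lemK {A : GR H} {U X : Set H} (hU : A.Atom U) (hX : A.S 1 X) (h4 : ¬ 4 ∣ Fintype.card H)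
    (hUi : ∀ x ∈ U, x⁻¹ ∈ U) (hXi : ∀ x ∈ X, x⁻¹ ∈ X) (P J : Subgroup H)
    (hP : ∀ x ∈ X, x ∉ U → x ∈ P) (hJ : A.S 0 (J : Set H)) (hJX : ∀ x ∈ J, x ∈ X)
    (e : H) (heJ : e ∈ J) (heP : e ∉ P) (q : H) (hqJ : q ∈ J) (hqU : q ∉ U) :
    ∃ (b : H) (V : Subgroup H), b * b = 1 ∧ b ∈ J ∧ b ∉ V ∧ V ≤ J ∧
      ∀ x ∈ J, (x ∈ U ↔ b * x ∉ V) := by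
  have hQ : A.S 1 (X \ U) := hX.diff hU.set
  have hS : A.S 0 {x | ∃ y ∈ X \ U, y⁻¹ * x ∈ X \ U} := hQ.mul hQ
  have hQi : ∀ x ∈ X \ U, x⁻¹ ∈ X \ U := by
    rintro x ⟨h1, h2⟩
    exact ⟨hXi x h1, fun h => h2 (by simpa using hUi _ h)⟩
  have hV0 := hS.closure (by
    rintro x ⟨y, hy, hyx⟩
    refine ⟨y⁻¹, hQi y hy, ?_⟩
    have := hQi _ hyx
    simpa [mul_comm] using this)
  set V0 := Subgroup.closure {x | ∃ y ∈ X \ U, y⁻¹ * x ∈ X \ U} with hV0def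
  have hV : A.S 0 ((V0 ⊓ J : Subgroup H) : Set H) := by
    rw [Subgroup.coe_inf]; exact hV0.inter hJ
  have hVP : V0 ≤ P := by
    rw [hV0def, Subgroup.closure_le]
    rintro x ⟨y, hy, hyx⟩
    have := mul_mem (hP y hy.1 hy.2) (hP _ hyx.1 hyx.2)
    simpa using this
  have heU : ∀ v ∈ V0 ⊓ J, e * v ∈ U := by
    intro v hv
    by_contra h
    have h1 := hP _ (hJX _ (mul_mem heJ hv.2)) h
    apply heP
    exact (Subgroup.mul_mem_cancel_right P (hVP hv.1)).1 h1
  have hVU : ∀ v ∈ V0 ⊓ J, v ∈ U :=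
    (hU.coset hV (by simpa using heU 1 (one_mem _))).1 heU
  have hprod : ∀ x ∈ J, x ∉ U → x * q ∈ V0 ⊓ J := by
    intro x hx hxU
    refine ⟨Subgroup.subset_closure ⟨x, ⟨hJX x hx, hxU⟩, ?_⟩, mul_mem hx hqJ⟩
    rw [inv_mul_cancel_left]
    exact ⟨hJX q hqJ, hqU⟩
  set V := V0 ⊓ J with hVdef
  have hqq := hprod q hqJ hqU
  have hqV : q ∉ V := fun h => hqU (hVU q h)
  have heven : Even (orderOf q) := by
    rw [← Nat.not_odd_iff_even]
    rintro ⟨k, hk⟩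
    apply hqV
    have h1 := pow_orderOf_eq_one q
    rw [hk, pow_succ, pow_mul, pow_two] at h1
    rw [← inv_mem_iff, ← eq_inv_of_mul_eq_one_left h1]
    exact pow_mem hqq k
  obtain ⟨b, k, hb, hbb⟩ := invol h4 heven
  have hbi : b⁻¹ = b := inv_eq_of_mul_eq_one_left hbb
  have hqb : b * q ∈ V := by
    have : b * q = (q * q) ^ (k + 1) := by
      rw [hb, ← pow_succ, ← pow_two, ← pow_mul]; congr 1
    rw [this]; exact pow_mem hqq _
  refine ⟨b, V, hbb, ?_, ?_, inf_le_right, ?_⟩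
  · rw [hb]; exact pow_mem hqJ _
  · intro h
    exact hqV ((Subgroup.mul_mem_cancel_left V h).1 hqb)
  · intro x hx
    constructor
    · intro hxU hbx
      apply hqU
      have h1 := (hU.coset hV hxU).2 hVU (x⁻¹ * q) (by
        have := mul_mem (inv_mem hbx) hqb
        rwa [mul_inv, mul_comm b⁻¹, mul_assoc, inv_mul_cancel_left] at this)
      rwa [mul_inv_cancel_left] at h1
    · intro hbx
      by_contra hxU
      apply hbx
      have h1 := mul_mem (mul_mem (hprod x hx hxU) (inv_mem hqq)) hqb
      have : x * q * (q * q)⁻¹ * (b * q) = b * x := by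
        rw [mul_inv]
        calc x * q * (q⁻¹ * q⁻¹) * (b * q) = b * x * (q * q⁻¹) * (q * q⁻¹) := by
              ac_rfl
          _ = b * x := by simp
      rwa [this] at h1

def Good (U : Set H) : Prop :=
  (∃ M : Subgroup H, U = M) ∨ ∃ (M V : Subgroup H) (b : H), b * b = 1 ∧ b ∈ M ∧ b ∉ V ∧ V ≤ M ∧
    ∀ x, x ∈ U ↔ x ∈ M ∧ b * x ∉ V

lemma base [IsCyclic H] {A : GR H} {U : Set H} (hU : A.Atom U) (h4 : ¬ 4 ∣ Fintype.card H)
    (h : ∀ p, p.Prime → p ≠ 2 → p ∣ Fintype.card H → ∀ x ∈ U, ¬ p ∣ orderOf x) : Good U := by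
  left
  have h2 : ∀ x ∈ U, x * x = 1 := by
    intro x hx
    have hc : orderOf x ∣ Fintype.card H := orderOf_dvd_card
    rw [← pow_two, ← orderOf_dvd_iff_pow_eq_one]
    have hpw : ∃ k, orderOf x = 2 ^ k := by
      refine ⟨_, Nat.eq_prime_pow_of_unique_prime_dvd (orderOf_pos x).ne' ?_⟩
      intro d hd hdx
      by_contra hne
      exact h d hd hne (hdx.trans hc) x hx hdx
    obtain ⟨k, hk⟩ := hpw
    rw [hk]
    have : k < 2 := by
      by_contra hk2
      apply h4
      refine Dvd.dvd.trans ?_ hc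
      rw [hk]
      exact pow_dvd_pow 2 (not_lt.1 hk2)
    interval_cases k <;> norm_num
  refine ⟨{ carrier := U, one_mem' := hU.one, mul_mem' := ?_, inv_mem' := ?_ }, rfl⟩
  · intro x y hx hy
    by_cases hx1 : x = 1
    · simpa [hx1] using hy
    by_cases hy1 : y = 1
    · simpa [hy1] using hx
    have ox : orderOf x = 2 := orderOf_eq_prime (by rw [pow_two, h2 x hx]) hx1
    have oy : orderOf y = 2 := orderOf_eq_prime (by rw [pow_two, h2 y hy]) hy1
    have hz := mem_zpowers_of_orderOf (oy.trans ox.symm)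
    rw [← mem_powers_iff_mem_zpowers] at hz
    obtain ⟨k, hk⟩ := hz
    simp only at hk
    rcases Nat.even_or_odd' k with ⟨m, rfl | rfl⟩
    · rw [pow_mul, pow_two, h2 x hx, one_pow] at hk
      exact absurd hk.symm hy1
    · rw [pow_succ, pow_mul, pow_two, h2 x hx, one_pow, one_mul] at hk
      rw [← hk, h2 x hx]; exact hU.one
  · intro x hx
    have : x⁻¹ = x := inv_eq_of_mul_eq_one_left (h2 x hx)
    show x⁻¹ ∈ U
    rwa [this]

end main

theorem main (n : ℕ) : ∀ (H : Type u) [CommGroup H] [Fintype H] [IsCyclic H],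
    Fintype.card H = n → ¬ 4 ∣ Fintype.card H → ∀ (A : GR H) (U : Set H), A.Atom U → Good U := by
  induction n using Nat.strong_induction_on with
  | _ n ih =>
  intro H _ _ _ hcard h4 A U hU
  by_cases hbase : ∀ p, p.Prime → p ≠ 2 → p ∣ Fintype.card H → ∀ x ∈ U, ¬ p ∣ orderOf x
  · exact base hU h4 hbase
  simp only [not_forall] at hbase
  obtain ⟨p, hp, hp2, hpH, hex⟩ := hbase
  have := Fact.mk hp
  rcases padic_main hU hp2 hpH with hl | ⟨Q, hQ, hQp, e, he, heN⟩
  · exact absurd hl (by simpa only [not_forall] using hex)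
  set N := rad (U ∪ Q) with hNdef
  have hN : A.S 0 (N : Set H) := (hU.set.union hQ).rad
  have : Fintype (H ⧸ N) := Fintype.ofFinite _
  have hcardN : Nat.card H = Nat.card (H ⧸ N) * Nat.card N :=
    Subgroup.card_eq_card_quotient_mul_card_subgroup N
  have he1 : e ≠ 1 := by rintro rfl; rw [orderOf_one] at he; exact hp.one_lt.ne he
  have hNpos : 1 < Nat.card N := by
    rw [Finite.one_lt_card_iff_nontrivial]
    exact (Subgroup.nontrivial_iff_exists_ne_one N).2 ⟨e, heN, he1⟩
  have hqpos : 0 < Nat.card (H ⧸ N) := Nat.card_pos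
  have hlt : Fintype.card (H ⧸ N) < n := by
    rw [← hcard, ← Nat.card_eq_fintype_card, ← Nat.card_eq_fintype_card (α := H), hcardN]
    nlinarith
  have h4' : ¬ 4 ∣ Fintype.card (H ⧸ N) := by
    intro h; apply h4
    rw [← Nat.card_eq_fintype_card] at h ⊢
    rw [hcardN]; exact h.mul_right _
  have hG := ih _ hlt (H ⧸ N) rfl h4' (A.quot N hN) _ (hU.quot N hN)
  set X : Set H := {x | ∃ y ∈ U, y⁻¹ * x ∈ (N : Set H)} with hXdef
  have hXS : A.S 1 X := by
    have := hU.set.mul hN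
    rwa [add_zero] at this
  have hUX : ∀ x ∈ U, x ∈ X := fun x hx => ⟨x, hx, by simp [one_mem]⟩
  have hXUQ : ∀ x ∈ X, x ∈ U ∪ Q := by
    rintro x ⟨y, hy, hyx⟩
    have := (mem_rad.1 hyx y).2 (Or.inl hy)
    rwa [mul_comm, mul_inv_cancel_left] at this
  have hUi : ∀ x ∈ U, x⁻¹ ∈ U := fun x hx => rational hU hx (orderOf_inv x)
  have hXi : ∀ x ∈ X, x⁻¹ ∈ X := by
    rintro x ⟨y, hy, hyx⟩
    refine ⟨y⁻¹, hUi y hy, ?_⟩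
    have := N.inv_mem hyx
    simpa [mul_comm] using this
  -- the subgroup of p'-elements
  let P : Subgroup H := (powMonoidHom (Fintype.card H / p ^ (Fintype.card H).factorization p)).ker
  have hPmem : ∀ x : H, ¬ p ∣ orderOf x → x ∈ P := by
    intro x hx
    rw [MonoidHom.mem_ker, powMonoidHom_apply, ← orderOf_dvd_iff_pow_eq_one]
    have h1 : orderOf x ∣ p ^ (Fintype.card H).factorization p *
        (Fintype.card H / p ^ (Fintype.card H).factorization p) := by
      rw [Nat.ordProj_mul_ordCompl_eq_self]; exact orderOf_dvd_card
    refine Nat.Coprime.dvd_of_dvd_mul_left ?_ h1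
    exact (Nat.Coprime.pow_left _ ((Nat.Prime.coprime_iff_not_dvd hp).2 hx)).symm
  have heP : e ∉ P := by
    intro h
    rw [MonoidHom.mem_ker, powMonoidHom_apply, ← orderOf_dvd_iff_pow_eq_one, he] at h
    exact Nat.not_dvd_ordCompl hp Fintype.card_ne_zero h
  have hP : ∀ x ∈ X, x ∉ U → x ∈ P := fun x hx hxU =>
    hPmem x (hQp x ((hXUQ x hx).resolve_left hxU))
  have hNX : ∀ x ∈ N, x ∈ X := fun x hx => ⟨1, hU.one, by simpa using hx⟩
  rcases hG with ⟨M', hM'⟩ | ⟨M', V', b', hbb, hbM, hbV, hVM, hx'⟩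
  · set M : Subgroup H := M'.comap (QuotientGroup.mk' N) with hM
    have hMX : ∀ x, x ∈ M ↔ x ∈ X := by
      intro x
      rw [hXdef, ← mem_image_iff, hM']
      rfl
    have hMX' : (M : Set H) = X := Set.ext hMX
    by_cases hq : ∃ q ∈ X, q ∉ U
    · right
      obtain ⟨q, hqX, hqU⟩ := hq
      have hMS : A.S 0 (M : Set H) := by
        have h1 := hXS.rad
        rw [← hMX'] at h1
        convert h1 using 1
        ext h
        rw [SetLike.mem_coe, SetLike.mem_coe, mem_rad]
        constructor
        · intro hh x; exact Subgroup.mul_mem_cancel_left M hh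
        · intro hh; simpa using (hh 1).2 (one_mem M)
      obtain ⟨b, V, hbb, hbM, hbV, hVM, hx⟩ := lemK hU hXS h4 hUi hXi P M hP hMS
        (fun x hx => (hMX x).1 hx) e ((hMX e).2 (hNX e heN)) heP q ((hMX q).2 hqX) hqU
      refine ⟨M, V, b, hbb, hbM, hbV, hVM, fun x => ?_⟩
      constructor
      · intro h
        have hxM := (hMX x).2 (hUX x h)
        exact ⟨hxM, (hx x hxM).1 h⟩
      · rintro ⟨h1, h2⟩
        exact (hx x h1).2 h2
    · push Not at hq
      left
      refine ⟨M, ?_⟩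
      rw [hMX']
      exact Set.Subset.antisymm hUX hq
  · have hb1 : b' ≠ 1 := by rintro rfl; exact hbV (one_mem _)
    have hb2 : orderOf b' = 2 := orderOf_eq_prime (by rw [pow_two, hbb]) hb1
    have hXU : ∀ x ∈ X, x ∈ U := by
      by_contra hq
      push Not at hq
      obtain ⟨q, ⟨u, hu, huq⟩, hqU⟩ := hq
      have hq2 : ∃ q ∈ N, q ∉ U := by
        by_contra hcon
        push Not at hcon
        have := (hU.coset hN hu).2 hcon _ huq
        rw [mul_inv_cancel_left] at this
        exact hqU this
      obtain ⟨q, hqN, hqU⟩ := hq2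
      obtain ⟨b, V, hcc, hcN, hcV, -, -⟩ := lemK hU hXS h4 hUi hXi P N hP hN hNX e heN heP q hqN hqU
      have hc1 : b ≠ 1 := by rintro rfl; exact hcV (one_mem _)
      have hc2 : orderOf b = 2 := orderOf_eq_prime (by rw [pow_two, hcc]) hc1
      have d1 : 2 ∣ Nat.card (H ⧸ N) := hb2 ▸ orderOf_dvd_natCard b'
      have d2 : 2 ∣ Nat.card N := hc2 ▸ Subgroup.orderOf_dvd_natCard N hcN
      apply h4
      rw [← Nat.card_eq_fintype_card, hcardN]
      exact mul_dvd_mul d1 d2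
    right
    obtain ⟨h, rfl⟩ := QuotientGroup.mk_surjective b'
    have heven : Even (orderOf h) := by
      rw [even_iff_two_dvd, ← hb2]
      exact orderOf_map_dvd (QuotientGroup.mk' N) h
    obtain ⟨b, k, hb, hbb'⟩ := invol h4 heven
    have hmk : (QuotientGroup.mk b : H ⧸ N) = QuotientGroup.mk h := by
      rw [hb, QuotientGroup.mk_pow, pow_succ, pow_mul, pow_two, hbb, one_pow, one_mul]
    rw [← hmk] at hbb hbM hbV hx'
    refine ⟨M'.comap (QuotientGroup.mk' N), V'.comap (QuotientGroup.mk' N), b, hbb', hbM, hbV,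
      Subgroup.comap_mono hVM, fun x => ?_⟩
    have : x ∈ U ↔ x ∈ X := ⟨hUX x, hXU x⟩
    rw [this, hXdef, ← mem_image_iff, hx']
    rfl

section bridge

lemma clsum_coeff {G : Type*} [Group G] [Fintype G] (X : Set G) (x : G) [Decidable (x ∈ X)] :
    (clsum X).coeff x = if x ∈ X then 1 else 0 := by
  classical
  simp [clsum, MonoidAlgebra.coeff_sum, Finsupp.finsetSum_apply, MonoidAlgebra.of_apply,
    MonoidAlgebra.coeff_single, Finsupp.single_apply]

lemma mem_span_iff {G : Type*} [Group G] [Fintype G] (A : SchurRing G) (F : MonoidAlgebra ℤ G) :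
    F ∈ Submodule.span ℤ (clsum '' A.P) ↔
      ∀ X ∈ A.P, ∀ x ∈ X, ∀ y ∈ X, F.coeff x = F.coeff y := by
  classical
  constructor
  · intro h X hX x hx y hy
    induction h using Submodule.span_induction with
    | mem F hF =>
      obtain ⟨Y, hY, rfl⟩ := hF
      rw [clsum_coeff, clsum_coeff]
      by_cases hXY : X = Y
      · subst hXY; simp [hx, hy]
      · have := A.disj X hX Y hY hXY
        rw [Set.disjoint_left] at this
        simp [this hx, this hy]
    | zero => simp
    | add F G _ _ h1 h2 => simp [h1, h2]
    | smul c F _ h =>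
      rw [MonoidAlgebra.coeff_smul, Finsupp.smul_apply, Finsupp.smul_apply, h]
  · intro h
    choose! rep hrep using A.nonempty_cls
    have hfin : A.P.Finite := Set.toFinite _
    have : F = ∑ X ∈ hfin.toFinset, F.coeff (rep X) • clsum X := by
      ext g
      obtain ⟨Y, hY, hgY⟩ := A.cover g
      rw [MonoidAlgebra.coeff_sum, Finsupp.finsetSum_apply, Finset.sum_eq_single Y]
      · rw [MonoidAlgebra.coeff_smul, Finsupp.smul_apply, clsum_coeff, if_pos hgY,
          h Y hY g hgY (rep Y) (hrep Y hY)]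
        simp
      · intro X hX hne
        have hd := A.disj X (by simpa using hX) Y hY hne
        rw [Set.disjoint_right] at hd
        rw [MonoidAlgebra.coeff_smul, Finsupp.smul_apply, clsum_coeff, if_neg (hd hgY)]
        simp
      · intro hh; exact absurd (by simpa using hY) hh
    rw [this]
    refine Submodule.sum_mem _ fun X hX => Submodule.smul_mem _ _ (Submodule.subset_span ?_)
    exact ⟨X, by simpa using hX, rfl⟩

variable {H : Type u} [CommGroup H] [Fintype H]

abbrev Z2 := Multiplicative (ZMod 2)

def ext (i : ZMod 2) (f : H → ℤ) : H × Z2 → ℤ :=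
  fun g => if g.2 = Multiplicative.ofAdd i then f g.1 else 0

lemma conv_ext (i j : ZMod 2) (f g : H → ℤ) (x : H) :
    conv (ext i f) (ext j g) (x, Multiplicative.ofAdd (i + j)) = conv f g x := by
  unfold conv
  rw [Fintype.sum_prod_type]
  refine Finset.sum_congr rfl fun y _ => ?_
  rw [Finset.sum_eq_single (Multiplicative.ofAdd i)]
  · simp [ext, ofAdd_add]
  · intro s _ hs
    simp [ext, hs]
  · simp

lemma snd_eq (A : SchurRing (H × Z2))
    (hH : A.isASet (Set.range fun h : H => (h, (1 : Z2))))
    {X : Set (H × Z2)} (hX : X ∈ A.P) {x y : H × Z2} (hx : x ∈ X) (hy : y ∈ X) : x.2 = y.2 := by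
  classical
  have h := (mem_span_iff A _).1 hH X hX x hx y hy
  rw [clsum_coeff, clsum_coeff] at h
  have e : ∀ z : H × Z2, z ∈ (Set.range fun h : H => (h, (1 : Z2))) ↔ z.2 = 1 := by
    rintro ⟨z, s⟩
    simp [eq_comm]
  simp only [e] at h
  have key : ∀ s t : ZMod 2, (s = 0 ↔ t = 0) → s = t := by decide
  apply key x.2.toAdd y.2.toAdd
  by_cases h1 : x.2 = 1 <;> by_cases h2 : y.2 = 1 <;> simp [h1, h2] at h ⊢

lemma ext_mem (A : SchurRing (H × Z2))
    (hH : A.isASet (Set.range fun h : H => (h, (1 : Z2)))) (i : ZMod 2) (f : H → ℤ)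
    (hf : ∀ x y, (∃ X ∈ A.P, (x, Multiplicative.ofAdd i) ∈ X ∧ (y, Multiplicative.ofAdd i) ∈ X) →
      f x = f y) : toMA (ext i f) ∈ Submodule.span ℤ (clsum '' A.P) := by
  rw [mem_span_iff]
  rintro X hX ⟨x, s⟩ hx ⟨y, t⟩ hy
  have hst : s = t := snd_eq A hH hX hx hy
  subst hst
  rw [toMA_coeff, toMA_coeff]
  by_cases hs : s = Multiplicative.ofAdd i
  · rw [hs] at hx hy
    simp only [ext, hs, if_true]
    exact hf x y ⟨X, hX, hx, hy⟩
  · simp [ext, hs]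

lemma span_mul {G : Type*} [Group G] [Fintype G] (A : SchurRing G) {F E : MonoidAlgebra ℤ G}
    (hF : F ∈ Submodule.span ℤ (clsum '' A.P)) (hE : E ∈ Submodule.span ℤ (clsum '' A.P)) :
    F * E ∈ Submodule.span ℤ (clsum '' A.P) := by
  induction hF using Submodule.span_induction with
  | mem F hF =>
    obtain ⟨X, hX, rfl⟩ := hF
    induction hE using Submodule.span_induction with
    | mem E hE =>
      obtain ⟨Y, hY, rfl⟩ := hE
      exact A.mul_closed X hX Y hY
    | zero => simp
    | add F G _ _ h1 h2 => rw [mul_add]; exact add_mem h1 h2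
    | smul c F _ h => rw [mul_smul_comm]; exact Submodule.smul_mem _ _ h
  | zero => simp
  | add F G _ _ h1 h2 => rw [add_mul]; exact add_mem h1 h2
  | smul c F _ h => rw [smul_mul_assoc]; exact Submodule.smul_mem _ _ h

def toGR (A : SchurRing (H × Z2))
    (hH : A.isASet (Set.range fun h : H => (h, (1 : Z2)))) : GR H where
  r i x y := ∃ X ∈ A.P, (x, Multiplicative.ofAdd i) ∈ X ∧ (y, Multiplicative.ofAdd i) ∈ X
  inv := by
    rintro i x y ⟨X, hX, hx, hy⟩
    have key : ∀ s : ZMod 2, -s = s := by decide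
    refine ⟨X⁻¹, A.inv_mem X hX, ?_, ?_⟩
    · simpa [← ofAdd_neg, key] using hx
    · simpa [← ofAdd_neg, key] using hy
  one := by
    have key : ∀ X ∈ A.P, ∀ x y : H, (x, Multiplicative.ofAdd (0 : ZMod 2)) ∈ X →
        (y, Multiplicative.ofAdd (0 : ZMod 2)) ∈ X → x = 1 → y = 1 := by
      rintro X hX x y hx hy rfl
      by_cases hne : X = {1}
      · rw [hne] at hy
        simpa using hy
      · have := A.disj X hX _ A.one_mem hne
        rw [Set.disjoint_left] at this
        exact absurd (by simp) (this hx)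
    rintro x y ⟨X, hX, hx, hy⟩
    exact ⟨key X hX x y hx hy, key X hX y x hy hx⟩
  mul := by
    rintro i j f g hf hg x y ⟨X, hX, hx, hy⟩
    have h := span_mul A (ext_mem A hH i f hf) (ext_mem A hH j g hg)
    rw [← toMA_conv, mem_span_iff] at h
    have := h X hX _ hx _ hy
    rwa [toMA_coeff, toMA_coeff, conv_ext, conv_ext] at this

end bridge

end S19

theorem stmt19 {H : Type*} [CommGroup H] [Fintype H] (hcyc : IsCyclic H)
    (n : ℕ) (hn : 1 < n) (hnodd : Odd n) (hcard : Fintype.card H = 2 * n)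
    (b : H) (hb : orderOf b = 2)
    (H₀ : Subgroup H) (hH₀ : Nat.card H₀ = n)
    (A : SchurRing (H × Multiplicative (ZMod 2)))
    (hH : A.isASet (Set.range fun h : H => (h, (1 : Multiplicative (ZMod 2)))))
    (hnota : ¬ A.isASet {((1 : H), Multiplicative.ofAdd (1 : ZMod 2))})
    (T : Set (H × Multiplicative (ZMod 2))) (hT : T ∈ A.P)
    (haT : ((1 : H), Multiplicative.ofAdd (1 : ZMod 2)) ∈ T) :
    (∃ L : Subgroup H, L ≤ H₀ ∧
      (T = cosetA (L : Set H) ∨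
       T = cosetA (L : Set H) ∪ cosetA ((fun l => l * b) '' (L : Set H)))) ∨
    (∃ L M : Subgroup H, L < M ∧ M ≤ H₀ ∧
      T = cosetA (M : Set H) ∪
        cosetA ((fun m => m * b) '' ((M : Set H) \ (L : Set H)))) := by
  have h4 : ¬ 4 ∣ Fintype.card H := by
    obtain ⟨k, hk⟩ := hnodd
    omega
  set U : Set H := {h | (h, Multiplicative.ofAdd (1 : ZMod 2)) ∈ T} with hUdef
  have hTU : T = cosetA U := by
    ext ⟨x, s⟩
    constructor
    · intro hx
      have : s = Multiplicative.ofAdd (1 : ZMod 2) := S19.snd_eq A hH hT hx haT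
      subst this
      exact ⟨x, hx, rfl⟩
    · rintro ⟨h, hh, hhx⟩
      rw [← hhx]; exact hh
  have hatom : (S19.toGR A hH).Atom U := by
    refine ⟨haT, ?_, ?_⟩
    · rintro x y ⟨X, hX, hx, hy⟩
      by_cases hXT : X = T
      · subst hXT; exact ⟨fun _ => hy, fun _ => hx⟩
      · have := A.disj X hX T hT hXT
        rw [Set.disjoint_left] at this
        exact ⟨fun h => absurd h (this hx), fun h => absurd h (this hy)⟩
    · intro f hf x hx
      exact hf x 1 ⟨T, hT, hx, haT⟩
  have hgood := S19.main _ H rfl h4 _ U hatom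
  have hbb : b * b = 1 := by rw [← pow_two, ← hb]; exact pow_orderOf_eq_one b
  have hb1 : b ≠ 1 := by rintro rfl; simp at hb
  have hodd : ∀ z ∈ H₀, z * z = 1 → z = 1 := by
    intro z hz hzz
    have h1 : orderOf z ∣ n := hH₀ ▸ Subgroup.orderOf_dvd_natCard H₀ hz
    have h2 : orderOf z ∣ 2 := orderOf_dvd_of_pow_eq_one (by rw [pow_two, hzz])
    have h3 : Nat.Coprime n 2 := Nat.coprime_two_right.2 hnodd
    rw [← orderOf_eq_one_iff]
    exact Nat.eq_one_of_dvd_coprimes h3 h1 h2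
  have hindex : H₀.index = 2 := by
    have := H₀.card_mul_index
    rw [hH₀, Nat.card_eq_fintype_card, hcard, mul_comm 2] at this
    exact Nat.eq_of_mul_eq_mul_left (by omega) this
  have hbH : b ∉ H₀ := fun h => hb1 (hodd b h hbb)
  have hmul : ∀ x, b * x ∈ H₀ ↔ x ∉ H₀ := by
    intro x
    rw [Subgroup.mul_mem_iff_of_index_two hindex]
    tauto
  have hbM : ∀ M : Subgroup H, ∀ x ∈ M, x ∉ H₀ → b ∈ M := by
    intro M x hx hx0
    have h1 := (hmul x).2 hx0
    have h2 : (b * x) ^ n = 1 := by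
      rw [← orderOf_dvd_iff_pow_eq_one, ← hH₀]
      exact Subgroup.orderOf_dvd_natCard H₀ h1
    obtain ⟨k, hk⟩ := hnodd
    have h3 : b ^ n = b := by rw [hk, pow_succ, pow_mul, pow_two, hbb, one_pow, one_mul]
    rw [mul_pow, h3] at h2
    rw [eq_inv_of_mul_eq_one_left h2]
    exact inv_mem (pow_mem hx n)
  have hbbx : ∀ x : H, b * x * b = x := by
    intro x; rw [mul_comm, ← mul_assoc, hbb, one_mul]
  have hunion : ∀ B C : Set H, cosetA B ∪ cosetA C = cosetA (B ∪ C) := by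
    intro B C; exact (Set.image_union _ _ _).symm
  rw [hTU]
  simp only [hunion]
  rcases hgood with ⟨M, hM⟩ | ⟨M, V, c, hcc, hcM, hcV, hVM, hx⟩
  · left
    by_cases hle : M ≤ H₀
    · exact ⟨M, hle, Or.inl (by rw [hM])⟩
    · refine ⟨M ⊓ H₀, inf_le_right, Or.inr ?_⟩
      obtain ⟨x, hxM, hx0⟩ := SetLike.not_le_iff_exists.1 hle
      have hbm := hbM M x hxM hx0
      congr 1
      rw [hM]
      ext y
      constructor
      · intro hy
        by_cases hy0 : y ∈ H₀
        · left; exact ⟨hy, hy0⟩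
        · right
          exact ⟨b * y, ⟨mul_mem hbm hy, (hmul y).2 hy0⟩, hbbx y⟩
      · rintro (hy | ⟨z, hz, rfl⟩)
        · exact hy.1
        · exact mul_mem hz.1 hbm
  · have hc1 : c ≠ 1 := by rintro rfl; exact hcV (one_mem _)
    have hcH : c ∉ H₀ := fun h => hc1 (hodd c h hcc)
    have hcb : b * c = 1 := by
      apply hodd _ ((hmul c).2 hcH)
      rw [mul_mul_mul_comm, hbb, hcc, one_mul]
    have hcb' : c = b := by
      rw [← inv_eq_of_mul_eq_one_right hcb, inv_eq_of_mul_eq_one_left hbb]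
    subst hcb'
    have hVH : V ≤ H₀ := by
      intro x hxV
      by_contra hx0
      exact hcV (hbM V x hxV hx0)
    have hU : U = ((M ⊓ H₀ : Subgroup H) : Set H) ∪
        (fun m => m * c) '' (((M ⊓ H₀ : Subgroup H) : Set H) \ (V : Set H)) := by
      ext y
      rw [hx]
      constructor
      · rintro ⟨hy, hyV⟩
        by_cases hy0 : y ∈ H₀
        · left; exact ⟨hy, hy0⟩
        · right
          exact ⟨c * y, ⟨⟨mul_mem hcM hy, (hmul y).2 hy0⟩, hyV⟩, hbbx y⟩
      · rintro (hy | ⟨z, ⟨hz, hzV⟩, rfl⟩)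
        · exact ⟨hy.1, fun h => (hmul y).1 (hVH h) hy.2⟩
        · refine ⟨mul_mem hz.1 hcM, ?_⟩
          show c * (z * c) ∉ V
          rw [← mul_assoc, hbbx]; exact hzV
    rcases (le_inf hVM hVH).lt_or_eq with hlt | heq
    · right
      exact ⟨V, M ⊓ H₀, hlt, inf_le_right, by rw [hU]⟩
    · left
      refine ⟨V, hVH, Or.inl ?_⟩
      rw [hU, ← heq]
      simp
end
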